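/- arXiv:math/0610540 — 3 statements merged into one kernel-verified Lean document; each statement's English description precedes it below -/
import Mathlib

section
/- Let μ = (μ₁,…,μ_n) be a tuple of non-negative integers and set H̃_μ(z) = z · ∏_{i=1}^n (z−μ_i−1) / ∏_{i=1}^n (z−μ_i). For positive integers k₁,…,k_l with K = k₁+⋯+k_l ≤ n, one has (−1)^l · (n)_K · k₁⋯k_l · χ̃^μ_{(k₁,…,k_l,1^{n−K})} = χ̃^μ_{(1^n)} · [z₁^{−1}]⋯[z_l^{−1}] [ ( ∏_{1≤r≤l} H̃_μ(z_r)·H̃_μ(z_r−1)⋯H̃_μ(z_r−k_r+1) ) · ∏_{1≤s<t≤l} ( (z_s−z_t)(z_s−z_t+k_t−k_s) ) / ( (z_s−z_t−k_s)(z_s−z_t+k_t) ) ], where the coefficient extraction is performed by expanding the rational expression as a formal Laurent series in decreasing powers of z_l (with coefficients rational functions of z₁,…,z_{l−1}), taking the coefficient of z_l^{−1}, and repeating successively with respect to z_{l−1}, …, z₁. -/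
open scoped BigOperators

/-- For a tuple `μ = (μ₁,…,μₙ)` of non-negative integers and a multiset `k` of positive
integers, `χ̃^μ_k` is the coefficient of `x^μ = x₁^{μ₁}⋯xₙ^{μₙ}` in
`(∑ᵢ xᵢ^{k₁}) ⋯ (∑ᵢ xᵢ^{k_r}) ⋅ ∑_{w ∈ Sₙ} sgn(w) x^{wδ}`, where `δ = (n-1,…,1,0)`. -/
noncomputable def chiTilde (n : ℕ) (μ : Fin n → ℕ) (k : Multiset ℕ) : ℤ :=
  MvPolynomial.coeff
    (Finsupp.equivFunOnFinite.symm μ)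
    ((Multiset.map (fun m => ∑ i : Fin n, MvPolynomial.X i ^ m) k).prod *
      ∑ w : Equiv.Perm (Fin n),
        MvPolynomial.C ((Equiv.Perm.sign w : ℤ)) *
          ∏ i : Fin n, MvPolynomial.X i ^ (n - 1 - ((w i : ℕ))))

/-- The function `H̃_μ(w) = w ⋅ ∏_{i=1}^n (w-μᵢ-1) / ∏_{i=1}^n (w-μᵢ)`, evaluated in any
field. -/
noncomputable def HtildeOf (n : ℕ) (μ : Fin n → ℕ) {F : Type} [Field F] (w : F) : F :=
  w * (∏ i : Fin n, (w - (μ i : F) - 1)) / ∏ i : Fin n, (w - (μ i : F))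

/-- Iterated Laurent series fields: level 0 is `ℚ`, level `l+1` is the field of formal
Laurent series over level `l`. -/
noncomputable def ItL : ℕ → (T : Type) × Field T
  | 0 => ⟨ℚ, inferInstance⟩
  | l + 1 =>
    haveI := (ItL l).2
    ⟨LaurentSeries (ItL l).1, inferInstance⟩

/-- The underlying type of the `l`-th iterated Laurent series field. -/
abbrev ItLT (l : ℕ) : Type := (ItL l).1

noncomputable instance (l : ℕ) : Field (ItLT l) := (ItL l).2

/-- The variable `z_{r+1}` (for `0 ≤ r < l`), as an element of the `l`-th iterated
Laurent series field: it is the inverse of the formal variable of the `(r+1)`-st level,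
so that expansions in increasing powers of the level-`(r+1)` formal variable are exactly
expansions in decreasing powers of `z_{r+1}`, with coefficients that are (expansions of)
functions of `z_1, …, z_r`. -/
noncomputable def zVar : (l : ℕ) → ℕ → ItLT l
  | 0, _ => 0
  | l + 1, r =>
    if r = l then
      (show LaurentSeries (ItLT l) from (HahnSeries.single (1 : ℤ) (1 : ItLT l))⁻¹)
    else
      (show LaurentSeries (ItLT l) from HahnSeries.C (zVar l r))

/-- Iterated coefficient extraction `[z₁^{-1}] ⋯ [z_l^{-1}]`: successively take the
coefficient of `z^{-1}` in the expansion in decreasing powers of `z = z_l, z_{l-1}, …`,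
i.e. the coefficient of the first power of the formal variable at each level. -/
noncomputable def extractInv : (l : ℕ) → ItLT l → ℚ
  | 0, x => x
  | l + 1, f => extractInv l ((show LaurentSeries (ItLT l) from f).coeff 1)


/-! ### Tower of Laurent series over `ℚ[X]` -/

noncomputable def ItR : ℕ → (T : Type) × CommRing T
  | 0 => ⟨Polynomial ℚ, inferInstance⟩
  | l + 1 =>
    haveI := (ItR l).2
    ⟨LaurentSeries (ItR l).1, inferInstance⟩

abbrev ItRT (l : ℕ) : Type := (ItR l).1

noncomputable instance (l : ℕ) : CommRing (ItRT l) := (ItR l).2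

/-- coefficientwise map of Laurent series -/
noncomputable def hmap {R S : Type} [CommRing R] [CommRing S] (f : R →+* S) :
    LaurentSeries R →+* LaurentSeries S where
  toFun x := HahnSeries.map x f
  map_one' := by
    ext n
    simp [HahnSeries.map_coeff, HahnSeries.coeff_one, apply_ite f]
  map_zero' := by ext n; simp
  map_add' x y := by ext n; simp
  map_mul' x y := by
    exact HahnSeries.map_mul (f : R →ₙ+* S)

theorem hmap_coeff {R S : Type} [CommRing R] [CommRing S] (f : R →+* S) (x : LaurentSeries R)
    (n : ℤ) : (hmap f x).coeff n = f (x.coeff n) := rfl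

theorem hmap_single {R S : Type} [CommRing R] [CommRing S] (f : R →+* S) (m : ℤ) (r : R) :
    hmap f (HahnSeries.single m r) = HahnSeries.single m (f r) := by
  ext n
  simp [hmap_coeff, HahnSeries.coeff_single, apply_ite f]

theorem hmap_C {R S : Type} [CommRing R] [CommRing S] (f : R →+* S) (r : R) :
    hmap f (HahnSeries.C r) = HahnSeries.C (f r) := hmap_single f 0 r

/-- explicit inverse of `z - c` -/
theorem exists_inv_sub {R : Type} [CommRing R] (c : R) :
    ∃ y : LaurentSeries R, (HahnSeries.single (-1 : ℤ) (1 : R) - HahnSeries.C c) * y = 1 ∧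
      y.coeff 1 = 1 := by
  have hu : IsUnit (1 - PowerSeries.C c * PowerSeries.X : PowerSeries R) := by
    rw [PowerSeries.isUnit_iff_constantCoeff]; simp
  obtain ⟨g, hg⟩ := hu.exists_right_inv
  have hg0 : PowerSeries.coeff 0 g = 1 := by
    have := congrArg (PowerSeries.constantCoeff) hg
    simpa using this
  refine ⟨HahnSeries.single (1 : ℤ) (1 : R) * HahnSeries.ofPowerSeries ℤ R g, ?_, ?_⟩
  · have h2 := congrArg (HahnSeries.ofPowerSeries ℤ R) hg
    simp only [map_mul, map_sub, map_one, HahnSeries.ofPowerSeries_C,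
      HahnSeries.ofPowerSeries_X] at h2
    rw [← h2, ← mul_assoc, sub_mul, HahnSeries.single_mul_single]
    simp
  · have := HahnSeries.coeff_single_mul_add (r := (1 : R))
      (x := HahnSeries.ofPowerSeries ℤ R g) (a := 0) (b := 1)
    rw [zero_add] at this
    rw [this, one_mul]
    have h3 := HahnSeries.ofPowerSeries_apply_coeff (Γ := ℤ) g 0
    rw [hg0] at h3
    exact_mod_cast h3

theorem isUnit_sub {R : Type} [CommRing R] (c : R) :
    IsUnit (HahnSeries.single (-1 : ℤ) (1 : R) - HahnSeries.C c : LaurentSeries R) := by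
  obtain ⟨y, hy, _⟩ := exists_inv_sub c
  exact IsUnit.of_mul_eq_one _ hy

noncomputable def phi : (l : ℕ) → ItRT l →+* ItLT (l + 1)
  | 0 => (Polynomial.eval₂RingHom (HahnSeries.C : ℚ →+* LaurentSeries ℚ)
      (HahnSeries.single (-1 : ℤ) (1 : ℚ)) : Polynomial ℚ →+* LaurentSeries ℚ)
  | l + 1 => (hmap (phi l) : LaurentSeries (ItRT l) →+* LaurentSeries (ItLT (l + 1)))

noncomputable def evQ (q : ℚ) : (l : ℕ) → ItRT l →+* ItLT l
  | 0 => (Polynomial.evalRingHom q : Polynomial ℚ →+* ℚ)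
  | l + 1 => (hmap (evQ q l) : LaurentSeries (ItRT l) →+* LaurentSeries (ItLT l))

noncomputable def liftL (l : ℕ) : ItLT l →+* ItLT (l + 1) :=
  (HahnSeries.C : ItLT l →+* LaurentSeries (ItLT l))

noncomputable def liftR (l : ℕ) : ItRT l →+* ItRT (l + 1) :=
  (HahnSeries.C : ItRT l →+* LaurentSeries (ItRT l))

noncomputable def topR (l : ℕ) : ItRT (l + 1) :=
  (HahnSeries.single (-1 : ℤ) (1 : ItRT l) : LaurentSeries (ItRT l))

noncomputable def topL (l : ℕ) : ItLT (l + 1) :=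
  (HahnSeries.single (-1 : ℤ) (1 : ItLT l) : LaurentSeries (ItLT l))

noncomputable def cR : (l : ℕ) → Polynomial ℚ →+* ItRT l
  | 0 => RingHom.id (Polynomial ℚ)
  | l + 1 => (liftR l).comp (cR l)

noncomputable def cL : (l : ℕ) → ℚ →+* ItLT l
  | 0 => RingHom.id ℚ
  | l + 1 => (liftL l).comp (cL l)

noncomputable def zR : (l : ℕ) → ℕ → ItRT l
  | 0, _ => 0
  | l + 1, r => if r = l then topR l else liftR l (zR l r)

theorem zVar_succ (l r : ℕ) : zVar (l + 1) r = if r = l then topL l else liftL l (zVar l r) := by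
  rw [zVar]
  congr 1
  change ((HahnSeries.single (1 : ℤ) (1 : ItLT l))⁻¹ : LaurentSeries (ItLT l)) =
    (HahnSeries.single (-1 : ℤ) (1 : ItLT l) : LaurentSeries (ItLT l))
  rw [HahnSeries.inv_single, inv_one]

theorem phi_liftR (l : ℕ) (x : ItRT l) : phi (l + 1) (liftR l x) = liftL (l + 1) (phi l x) :=
  hmap_C (phi l) x

theorem ev_liftR (q : ℚ) (l : ℕ) (x : ItRT l) :
    evQ q (l + 1) (liftR l x) = liftL l (evQ q l x) :=
  hmap_C (evQ q l) x

theorem phi_topR (l : ℕ) : phi (l + 1) (topR l) = topL (l + 1) := by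
  refine (hmap_single (phi l) (-1) 1).trans ?_
  rw [map_one]; rfl

theorem ev_topR (q : ℚ) (l : ℕ) : evQ q (l + 1) (topR l) = topL l := by
  refine (hmap_single (evQ q l) (-1) 1).trans ?_
  rw [map_one]; rfl

theorem phi_zR (l r : ℕ) (h : r < l) : phi l (zR l r) = zVar (l + 1) (r + 1) := by
  induction l with
  | zero => omega
  | succ l ih =>
    rw [zVar_succ, zR]
    by_cases hr : r = l
    · simp only [hr, if_true]; exact phi_topR l
    · rw [if_neg hr, if_neg (by omega), phi_liftR, ih (by omega)]

theorem ev_zR (q : ℚ) (l r : ℕ) (h : r < l) : evQ q l (zR l r) = zVar l r := by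
  induction l with
  | zero => omega
  | succ l ih =>
    rw [zVar_succ, zR]
    by_cases hr : r = l
    · simp only [hr, if_true]; exact ev_topR q l
    · rw [if_neg hr, if_neg hr, ev_liftR, ih (by omega)]

theorem phi_X (l : ℕ) : phi l (cR l Polynomial.X) = zVar (l + 1) 0 := by
  induction l with
  | zero =>
    rw [zVar_succ, if_pos rfl]
    exact Polynomial.eval₂_X _ _
  | succ l ih =>
    rw [zVar_succ, if_neg (by omega), ← ih, ← phi_liftR]; rfl

theorem phi_C (l : ℕ) (a : ℚ) : phi l (cR l (Polynomial.C a)) = cL (l + 1) a := by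
  induction l with
  | zero => exact Polynomial.eval₂_C _ _
  | succ l ih =>
    change phi (l + 1) (liftR l (cR l (Polynomial.C a))) = liftL (l + 1) (cL (l + 1) a)
    rw [← ih, ← phi_liftR]

theorem ev_cR (q : ℚ) (l : ℕ) (p : Polynomial ℚ) : evQ q l (cR l p) = cL l (p.eval q) := by
  induction l with
  | zero => rfl
  | succ l ih =>
    change evQ q (l + 1) (liftR l (cR l p)) = liftL l (cL l _)
    rw [← ih, ← ev_liftR]

theorem extractInv_add (l : ℕ) (x y : ItLT l) :
    extractInv l (x + y) = extractInv l x + extractInv l y := by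
  induction l with
  | zero => rfl
  | succ l ih =>
    exact ih ((show LaurentSeries (ItLT l) from x).coeff 1) ((show LaurentSeries (ItLT l) from y).coeff 1)

theorem extractInv_zero (l : ℕ) : extractInv l 0 = 0 := by
  have := extractInv_add l 0 0
  simpa using this

theorem extractInv_sum {ι : Type} (l : ℕ) (s : Finset ι) (f : ι → ItLT l) :
    extractInv l (∑ i ∈ s, f i) = ∑ i ∈ s, extractInv l (f i) := by
  classical
  induction s using Finset.induction_on with
  | empty => simp [extractInv_zero]
  | insert a s ha ih => rw [Finset.sum_insert ha, Finset.sum_insert ha, extractInv_add, ih]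

theorem extractInv_cL (l : ℕ) (a : ℚ) (x : ItLT l) :
    extractInv l (cL l a * x) = a * extractInv l x := by
  induction l with
  | zero => rfl
  | succ l ih =>
    change extractInv l (((HahnSeries.C (cL l a) : LaurentSeries (ItLT l)) *
      (show LaurentSeries (ItLT l) from x)).coeff 1) = _
    have : ((HahnSeries.C (cL l a) : LaurentSeries (ItLT l)) *
      (show LaurentSeries (ItLT l) from x)).coeff 1 =
      cL l a * (show LaurentSeries (ItLT l) from x).coeff 1 := by
      exact HahnSeries.coeff_single_zero_mul
    rw [this, ih]; rfl

theorem coeff_eval₂_pos (p : Polynomial ℚ) :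
    (Polynomial.eval₂ (HahnSeries.C : ℚ →+* LaurentSeries ℚ)
      (HahnSeries.single (-1 : ℤ) (1 : ℚ)) p).coeff 1 = 0 := by
  induction p using Polynomial.induction_on' with
  | add p q hp hq => rw [Polynomial.eval₂_add, HahnSeries.coeff_add, hp, hq, add_zero]
  | monomial n a =>
    rw [Polynomial.eval₂_monomial, HahnSeries.single_pow]
    have : (HahnSeries.C a * HahnSeries.single (n • (-1 : ℤ)) ((1 : ℚ) ^ n) : LaurentSeries ℚ).coeff 1
      = a * (HahnSeries.single (n • (-1 : ℤ)) ((1 : ℚ) ^ n) : LaurentSeries ℚ).coeff 1 :=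
      HahnSeries.coeff_single_zero_mul
    rw [this, HahnSeries.coeff_single_of_ne, mul_zero]
    simp; omega

theorem residue_base (q : ℚ) (p : Polynomial ℚ) :
    ((Polynomial.eval₂ (HahnSeries.C : ℚ →+* LaurentSeries ℚ)
      (HahnSeries.single (-1 : ℤ) (1 : ℚ)) p) *
        (HahnSeries.single (-1 : ℤ) (1 : ℚ) - HahnSeries.C q : LaurentSeries ℚ)⁻¹).coeff 1
      = p.eval q := by
  obtain ⟨y, hy, hy1⟩ := exists_inv_sub q
  rw [inv_eq_of_mul_eq_one_right hy]
  have hp := Polynomial.modByMonic_add_div p (Polynomial.X - Polynomial.C q)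
  rw [Polynomial.modByMonic_X_sub_C_eq_C_eval] at hp
  conv_lhs => rw [← hp]
  rw [Polynomial.eval₂_add, Polynomial.eval₂_mul, Polynomial.eval₂_C, Polynomial.eval₂_sub,
    Polynomial.eval₂_X, Polynomial.eval₂_C, add_mul, mul_right_comm, hy, one_mul,
    HahnSeries.coeff_add, coeff_eval₂_pos, add_zero]
  refine (HahnSeries.coeff_single_zero_mul).trans ?_
  rw [hy1, mul_one]

theorem residue_lemma (q : ℚ) (l : ℕ) (P : ItRT l) :
    extractInv (l + 1) (phi l P * (zVar (l + 1) 0 - cL (l + 1) q)⁻¹) =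
      extractInv l (evQ q l P) := by
  induction l with
  | zero =>
    rw [zVar_succ, if_pos rfl]
    exact residue_base q P
  | succ l ih =>
    rw [zVar_succ, if_neg (by omega)]
    change _ = extractInv l (evQ q l ((show LaurentSeries (ItRT l) from P).coeff 1))
    rw [← ih]
    change extractInv (l + 2) (_ * (liftL (l + 1) (zVar (l + 1) 0) - liftL (l + 1) (cL (l + 1) q))⁻¹) = _
    rw [← map_sub, ← map_inv₀]
    change extractInv (l + 1) (((show LaurentSeries (ItLT (l + 1)) from phi (l + 1) P) *
      (HahnSeries.C ((zVar (l + 1) 0 - (cL (l + 1)) q)⁻¹) : LaurentSeries (ItLT (l + 1)))).coeff 1) = _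
    congr 1
    exact HahnSeries.coeff_mul_single_zero

theorem isUnit_zR_sub_c (l r : ℕ) (h : r < l) (x : Polynomial ℚ) :
    IsUnit (zR l r - cR l x) := by
  induction l with
  | zero => omega
  | succ l ih =>
    rw [zR]
    by_cases hr : r = l
    · rw [if_pos hr]
      exact isUnit_sub (cR l x)
    · rw [if_neg hr]
      change IsUnit (liftR l (zR l r) - liftR l (cR l x))
      rw [← map_sub]
      exact (ih (by omega)).map (liftR l)

theorem isUnit_zR_sub_zR (l r s : ℕ) (h : r < l) (hs : s < r) (x : Polynomial ℚ) :
    IsUnit (zR l r - (zR l s + cR l x)) := by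
  induction l with
  | zero => omega
  | succ l ih =>
    have hsl : s ≠ l := by omega
    rw [zR, zR, if_neg hsl]
    by_cases hr : r = l
    · rw [if_pos hr]
      change IsUnit (topR l - (liftR l (zR l s) + liftR l (cR l x)))
      rw [← map_add]
      exact isUnit_sub (zR l s + cR l x)
    · rw [if_neg hr]
      change IsUnit (liftR l (zR l r) - (liftR l (zR l s) + liftR l (cR l x)))
      rw [← map_add, ← map_sub]
      exact (ih (by omega)).map (liftR l)

instance (l : ℕ) : CharZero (ItLT l) := charZero_of_injective_ringHom (cL l).injective

/-! ### The rational expression over a commutative ring -/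

noncomputable def crossE {A : Type} [CommRing A] (a b : A) (ka kb : ℕ) : A :=
  ((a - b) * (a - b + (kb : A) - (ka : A))) *
    Ring.inverse ((a - b - (ka : A)) * (a - b + (kb : A)))

noncomputable def oneE {A : Type} [CommRing A] {n : ℕ} (μ : Fin n → ℕ) (z : A) (k : ℕ) : A :=
  (∏ j ∈ Finset.range k, (z - (j : A))) *
    ∏ i, ((z - (μ i : A) - (k : A)) * Ring.inverse (z - (μ i : A)))

noncomputable def Gexp {A : Type} [CommRing A] {n : ℕ} (l : ℕ) (z : Fin l → A) (μ : Fin n → ℕ)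
    (k : Fin l → ℕ) : A :=
  (∏ r, oneE μ (z r) (k r)) *
    ∏ s, ∏ t, if s < t then crossE (z s) (z t) (k s) (k t) else 1

theorem Gexp_succ {A : Type} [CommRing A] {n : ℕ} (l : ℕ) (z : Fin (l + 1) → A) (μ : Fin n → ℕ)
    (k : Fin (l + 1) → ℕ) :
    Gexp (l + 1) z μ k = oneE μ (z 0) (k 0) *
      (∏ t : Fin l, crossE (z 0) (z t.succ) (k 0) (k t.succ)) *
      Gexp l (fun r => z r.succ) μ (fun r => k r.succ) := by
  unfold Gexp
  simp only [Fin.prod_univ_succ, if_false, Fin.succ_pos, if_true, Fin.succ_lt_succ_iff,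
    Fin.not_lt_zero, one_mul]
  ring

theorem map_ring_inverse {A B : Type} [CommRing A] [CommRing B] (f : A →+* B) (a : A)
    (h : IsUnit a) : f (Ring.inverse a) = Ring.inverse (f a) := by
  obtain ⟨u, rfl⟩ := h
  have : f (u : A) = ((Units.map (f : A →* B) u : Bˣ) : B) := rfl
  rw [this, Ring.inverse_unit, Ring.inverse_unit, ← map_inv]; rfl

theorem map_crossE {A B : Type} [CommRing A] [CommRing B] (f : A →+* B) (a b : A) (ka kb : ℕ)
    (h1 : IsUnit (a - b - (ka : A))) (h2 : IsUnit (a - b + (kb : A))) :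
    f (crossE a b ka kb) = crossE (f a) (f b) ka kb := by
  unfold crossE
  rw [map_mul, map_ring_inverse f _ (h1.mul h2)]
  simp

theorem map_oneE {A B : Type} [CommRing A] [CommRing B] (f : A →+* B) {n : ℕ} (μ : Fin n → ℕ)
    (z : A) (k : ℕ) (h : ∀ m : ℕ, IsUnit (z - (m : A))) :
    f (oneE μ z k) = oneE μ (f z) k := by
  unfold oneE
  rw [map_mul, map_prod, map_prod]
  congr 1
  · simp
  · refine Finset.prod_congr rfl fun i _ => ?_
    rw [map_mul, map_ring_inverse f _ (h _)]
    simp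

theorem map_Gexp {A B : Type} [CommRing A] [CommRing B] (f : A →+* B) {n l : ℕ} (μ : Fin n → ℕ)
    (z : Fin l → A) (k : Fin l → ℕ) (h : ∀ r, ∀ m : ℕ, IsUnit (z r - (m : A)))
    (h1 : ∀ s t, s < t → ∀ m : ℕ, IsUnit (z s - z t - (m : A)))
    (h2 : ∀ s t, s < t → ∀ m : ℕ, IsUnit (z s - z t + (m : A))) :
    f (Gexp l z μ k) = Gexp l (fun r => f (z r)) μ k := by
  unfold Gexp
  simp only [map_mul, map_prod]
  congr 1
  · exact Finset.prod_congr rfl fun r _ => map_oneE f μ _ _ (h r)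
  · refine Finset.prod_congr rfl fun s _ => Finset.prod_congr rfl fun t _ => ?_
    split_ifs with hst
    · exact map_crossE f _ _ _ _ (h1 s t hst _) (h2 s t hst _)
    · exact map_one f

theorem zR_unit_nat (l : ℕ) (r : ℕ) (h : r < l) (m : ℕ) : IsUnit (zR l r - (m : ItRT l)) := by
  have := isUnit_zR_sub_c l r h (m : Polynomial ℚ)
  rwa [map_natCast] at this

theorem zR_unit1 (l : ℕ) (s t : ℕ) (h : t < l) (hs : s < t) (m : ℕ) :
    IsUnit (zR l s - zR l t - (m : ItRT l)) := by
  have := (isUnit_zR_sub_zR l t s h hs (-(m : Polynomial ℚ))).neg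
  rw [map_neg, map_natCast] at this
  convert this using 1
  ring

theorem zR_unit2 (l : ℕ) (s t : ℕ) (h : t < l) (hs : s < t) (m : ℕ) :
    IsUnit (zR l s - zR l t + (m : ItRT l)) := by
  have := (isUnit_zR_sub_zR l t s h hs (m : Polynomial ℚ)).neg
  rw [map_natCast] at this
  convert this using 1
  ring

theorem X_unit1 (l : ℕ) (t : ℕ) (h : t < l) (m : ℕ) :
    IsUnit (cR l Polynomial.X - zR l t - (m : ItRT l)) := by
  have := (isUnit_zR_sub_c l t h (Polynomial.X - (m : Polynomial ℚ))).neg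
  rw [map_sub, map_natCast] at this
  convert this using 1
  ring

theorem X_unit2 (l : ℕ) (t : ℕ) (h : t < l) (m : ℕ) :
    IsUnit (cR l Polynomial.X - zR l t + (m : ItRT l)) := by
  have := (isUnit_zR_sub_c l t h (Polynomial.X + (m : Polynomial ℚ))).neg
  rw [map_add, map_natCast] at this
  convert this using 1
  ring

theorem zVar_sub_ne (l r : ℕ) (h : r < l) (m : ℕ) : zVar l r - (m : ItLT l) ≠ 0 := by
  have := ((zR_unit_nat l r h m).map (evQ 0 l)).ne_zero
  rwa [map_sub, ev_zR 0 l r h, map_natCast] at this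

/-- absorbing the cross term -/
theorem exchange {F : Type} [Field F] {n : ℕ} (μ : Fin n → ℕ) (i : Fin n) (k0 k : ℕ)
    (h : k0 ≤ μ i) (z : F) (hz : ∀ m : ℕ, z - (m : F) ≠ 0) :
    crossE (μ i : F) z k0 k * oneE μ z k = oneE (Function.update μ i (μ i - k0)) z k := by
  unfold crossE oneE
  simp only [Ring.inverse_eq_inv']
  rw [← Finset.mul_prod_erase _ _ (Finset.mem_univ i),
    ← Finset.mul_prod_erase Finset.univ (fun j => (z - ((Function.update μ i (μ i - k0) j : ℕ) : F)
      - (k : F)) * (z - ((Function.update μ i (μ i - k0) j : ℕ) : F))⁻¹) (Finset.mem_univ i)]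
  have he : ∏ x ∈ Finset.univ.erase i, ((z - ((Function.update μ i (μ i - k0) x : ℕ) : F)
      - (k : F)) * (z - ((Function.update μ i (μ i - k0) x : ℕ) : F))⁻¹) =
      ∏ x ∈ Finset.univ.erase i, ((z - (μ x : F) - (k : F)) * (z - (μ x : F))⁻¹) := by
    refine Finset.prod_congr rfl fun x hx => ?_
    rw [Function.update_of_ne (Finset.ne_of_mem_erase hx)]
  rw [he, Function.update_self]
  have h1 := hz (μ i)
  have h2 := hz (μ i + k)
  have h3 := hz (μ i - k0)
  push_cast [Nat.cast_sub h] at h2 h3 ⊢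
  have h4 : (μ i : F) - z - k0 ≠ 0 := fun h => h3 (by linear_combination -h)
  have h5 : (μ i : F) - z + k ≠ 0 := fun h => h2 (by linear_combination -h)
  generalize (∏ x ∈ Finset.univ.erase i, ((z - (μ x : F) - (k : F)) * (z - (μ x : F))⁻¹)) = Q
  generalize (∏ j ∈ Finset.range k, (z - (j : F))) = Q'
  have key : ((μ i : F) - z) * ((μ i : F) - z + k - k0) * (((μ i : F) - z - k0) * ((μ i : F) - z + k))⁻¹ *
    ((z - μ i - k) * (z - μ i)⁻¹) = (z - ((μ i : F) - k0) - k) * (z - ((μ i : F) - k0))⁻¹ := by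
    field_simp
    ring
  linear_combination Q * Q' * key

/-! ### Recursion for the extracted coefficient -/

noncomputable def RR (l : ℕ) {n : ℕ} (μ : Fin n → ℕ) (k : Fin l → ℕ) : ℚ :=
  extractInv l (Gexp l (fun r => zVar l r) μ k)

noncomputable def resPoly {n : ℕ} (μ : Fin n → ℕ) (k : ℕ) : Polynomial ℚ :=
  (∏ j ∈ Finset.range k, (Polynomial.X - (j : Polynomial ℚ))) *
    ∏ i, (Polynomial.X - (μ i : Polynomial ℚ) - (k : Polynomial ℚ))

theorem partial_fractions {F : Type} [Field F] {n : ℕ} (hn : 0 < n) (v : Fin n → F)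
    (hv : Function.Injective v) (z : F) (hz : ∀ i, z - v i ≠ 0) :
    ∏ i, (z - v i)⁻¹ = ∑ i, (∏ j ∈ Finset.univ.erase i, (v i - v j)⁻¹) * (z - v i)⁻¹ := by
  have hne : (Finset.univ : Finset (Fin n)).Nonempty := ⟨⟨0, hn⟩, Finset.mem_univ _⟩
  have h := Lagrange.eval_interpolate_not_at_node (s := Finset.univ) (v := v) (x := z)
    (1 : Fin n → F) (fun i _ => sub_ne_zero.1 (hz i))
  rw [Lagrange.interpolate_one hv.injOn hne, Polynomial.eval_one, Lagrange.eval_nodal] at h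
  simp only [Pi.one_apply, mul_one, Lagrange.nodalWeight] at h
  rw [Finset.prod_inv_distrib]
  exact inv_eq_of_mul_eq_one_right h.symm

theorem RR_succ (l : ℕ) {n : ℕ} (hn : 0 < n) (μ : Fin n → ℕ) (hμ : Function.Injective μ)
    (k : Fin (l + 1) → ℕ) :
    RR (l + 1) μ k = ∑ i, ((∏ j ∈ Finset.univ.erase i, ((μ i : ℚ) - (μ j : ℚ))⁻¹) *
      (resPoly μ (k 0)).eval (μ i : ℚ)) *
      (if k 0 ≤ μ i then RR l (Function.update μ i (μ i - k 0)) (fun r => k r.succ) else 0) := by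
  set P : ItRT l := cR l (resPoly μ (k 0)) *
    (∏ t : Fin l, crossE (cR l Polynomial.X) (zR l t) (k 0) (k t.succ)) *
    Gexp l (fun r => zR l r) μ (fun r => k r.succ) with hP
  have hphi : Gexp (l + 1) (fun r => zVar (l + 1) r) μ k =
      phi l P * ∏ i, (zVar (l + 1) 0 - (μ i : ItLT (l + 1)))⁻¹ := by
    rw [Gexp_succ, hP, map_mul, map_mul, map_prod,
      map_Gexp _ _ _ _ (fun r m => zR_unit_nat l r r.2 m)
        (fun s t h m => zR_unit1 l s t t.2 h m) (fun s t h m => zR_unit2 l s t t.2 h m)]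
    have e1 : ∀ r : Fin l, phi l (zR l r) = zVar (l + 1) ((r.succ : Fin (l + 1)) : ℕ) :=
      fun r => by rw [phi_zR l r r.2]; simp
    have e2 : ∀ t : Fin l, phi l (crossE (cR l Polynomial.X) (zR l t) (k 0) (k t.succ)) =
        crossE (zVar (l + 1) ((0 : Fin (l + 1)) : ℕ)) (zVar (l + 1) ((t.succ : Fin (l + 1)) : ℕ))
          (k 0) (k t.succ) := fun t => by
      rw [map_crossE _ _ _ _ _ (X_unit1 l t t.2 _) (X_unit2 l t t.2 _), e1, phi_X]; rfl
    simp only [e1, e2]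
    have e3 : oneE μ (zVar (l + 1) ((0 : Fin (l + 1)) : ℕ)) (k 0) =
        phi l (cR l (resPoly μ (k 0))) * ∏ i, (zVar (l + 1) 0 - (μ i : ItLT (l + 1)))⁻¹ := by
      unfold oneE resPoly
      simp only [Ring.inverse_eq_inv', Finset.prod_mul_distrib, map_mul, map_prod, map_sub,
        map_natCast, phi_X, Fin.val_zero]
      ring
    rw [e3]; ring
  have hz0 : ∀ i, zVar (l + 1) 0 - (μ i : ItLT (l + 1)) ≠ 0 :=
    fun i => zVar_sub_ne (l + 1) 0 (by omega) _
  unfold RR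
  rw [hphi, partial_fractions hn (fun i => (μ i : ItLT (l + 1)))
    (fun a b h => hμ (Nat.cast_injective h)) _ hz0, Finset.mul_sum, extractInv_sum]
  refine Finset.sum_congr rfl fun i _ => ?_
  have hw : (∏ j ∈ Finset.univ.erase i, ((μ i : ItLT (l + 1)) - (μ j : ItLT (l + 1)))⁻¹) =
      cL (l + 1) (∏ j ∈ Finset.univ.erase i, ((μ i : ℚ) - (μ j : ℚ))⁻¹) := by
    simp only [map_prod, map_inv₀, map_sub, map_natCast]
  have hq : (μ i : ItLT (l + 1)) = cL (l + 1) (μ i : ℚ) := by rw [map_natCast]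
  rw [hw, mul_left_comm, extractInv_cL, hq, residue_lemma, mul_assoc]
  congr 1
  have hev : evQ (μ i : ℚ) l P = cL l ((resPoly μ (k 0)).eval (μ i : ℚ)) *
      ((∏ t : Fin l, crossE (μ i : ItLT l) (zVar l t) (k 0) (k t.succ)) *
        Gexp l (fun r => zVar l r) μ (fun r => k r.succ)) := by
    rw [hP, map_mul, map_mul, map_prod,
      map_Gexp _ _ _ _ (fun r m => zR_unit_nat l r r.2 m)
        (fun s t h m => zR_unit1 l s t t.2 h m) (fun s t h m => zR_unit2 l s t t.2 h m), ev_cR,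
      mul_assoc]
    have e1 : ∀ r : Fin l, evQ (μ i : ℚ) l (zR l r) = zVar l r :=
      fun r => by rw [ev_zR _ l r r.2]
    have e2 : ∀ t : Fin l, evQ (μ i : ℚ) l (crossE (cR l Polynomial.X) (zR l t) (k 0) (k t.succ)) =
        crossE (μ i : ItLT l) (zVar l t) (k 0) (k t.succ) := fun t => by
      rw [map_crossE _ _ _ _ _ (X_unit1 l t t.2 _) (X_unit2 l t t.2 _), e1, ev_cR,
        Polynomial.eval_X, map_natCast]
    simp only [e1, e2]
  rw [hev, extractInv_cL]
  by_cases hk : k 0 ≤ μ i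
  · rw [if_pos hk]
    congr 2
    unfold Gexp
    rw [← mul_assoc, ← Finset.prod_mul_distrib]
    congr 1
    exact Finset.prod_congr rfl fun t _ =>
      exchange μ i (k 0) (k t.succ) hk _ (zVar_sub_ne l t t.2)
  · rw [if_neg hk, mul_zero]
    have : (resPoly μ (k 0)).eval (μ i : ℚ) = 0 := by
      unfold resPoly
      rw [Polynomial.eval_mul, Polynomial.eval_prod,
        Finset.prod_eq_zero (Finset.mem_range.2 (not_le.1 hk)), zero_mul]
      simp
    rw [this, zero_mul]

theorem prod_H {F : Type} [Field F] {n : ℕ} (μ : Fin n → ℕ) (k : ℕ)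
    (z : F) (hz : ∀ m : ℕ, z - (m : F) ≠ 0) :
    ∏ j ∈ Finset.range k, HtildeOf n μ (z - (j : F)) = oneE μ z k := by
  unfold oneE
  simp only [Ring.inverse_eq_inv']
  induction k with
  | zero =>
    simp only [Finset.range_zero, Finset.prod_empty, one_mul, Nat.cast_zero, sub_zero]
    rw [Finset.prod_eq_one fun i _ => mul_inv_cancel₀ (hz (μ i))]
  | succ k ih =>
    rw [Finset.prod_range_succ, Finset.prod_range_succ, ih, HtildeOf, mul_div_assoc,
      ← Finset.prod_div_distrib, mul_mul_mul_comm, ← Finset.prod_mul_distrib]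
    congr 1
    refine Finset.prod_congr rfl fun i _ => ?_
    have h1 := hz (μ i)
    have h2 := hz (μ i + k)
    push_cast at h2 ⊢
    have h3 : z - (k : F) - (μ i : F) ≠ 0 := fun h => h2 (by linear_combination h)
    field_simp
    ring

theorem expr_eq (n : ℕ) (μ : Fin n → ℕ) (l : ℕ) (k : Fin l → ℕ) :
    ((∏ r : Fin l, ∏ j ∈ Finset.range (k r),
              HtildeOf n μ (zVar l r - (j : ItLT l))) *
            ∏ p ∈ Finset.univ.filter (fun p : Fin l × Fin l => p.1 < p.2),
              ((zVar l p.1 - zVar l p.2) *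
                  (zVar l p.1 - zVar l p.2 + (k p.2 : ItLT l) - (k p.1 : ItLT l))) /
                ((zVar l p.1 - zVar l p.2 - (k p.1 : ItLT l)) *
                  (zVar l p.1 - zVar l p.2 + (k p.2 : ItLT l)))) =
    Gexp l (fun r => zVar l r) μ k := by
  unfold Gexp
  congr 1
  · exact Finset.prod_congr rfl fun r _ => prod_H μ _ _ (zVar_sub_ne l r r.2)
  · rw [Finset.prod_filter, Fintype.prod_prod_type]
    refine Finset.prod_congr rfl fun s _ => Finset.prod_congr rfl fun t _ => ?_
    unfold crossE
    rw [Ring.inverse_eq_inv', div_eq_mul_inv]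

/-! ### The combinatorial side -/

theorem coeff_psum_mul {n : ℕ} (μ : Fin n → ℕ) (k : ℕ) (p : MvPolynomial (Fin n) ℤ) :
    MvPolynomial.coeff (Finsupp.equivFunOnFinite.symm μ)
      ((∑ i : Fin n, MvPolynomial.X i ^ k) * p) =
    ∑ i, if k ≤ μ i then MvPolynomial.coeff
      (Finsupp.equivFunOnFinite.symm (Function.update μ i (μ i - k))) p else 0 := by
  rw [Finset.sum_mul, MvPolynomial.coeff_sum]
  refine Finset.sum_congr rfl fun i _ => ?_
  rw [MvPolynomial.X_pow_eq_monomial, MvPolynomial.coeff_monomial_mul']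
  have h1 : (Finsupp.single i k ≤ Finsupp.equivFunOnFinite.symm μ) ↔ k ≤ μ i := by
    rw [Finsupp.single_le_iff]; simp
  simp only [h1, one_mul]
  split_ifs with h
  · congr 1
    ext j
    by_cases hj : j = i
    · subst hj; simp
    · simp [Function.update_of_ne hj, Ne.symm hj]
  · rfl

theorem chi_cons (n : ℕ) (μ : Fin n → ℕ) (k : ℕ) (s : Multiset ℕ) :
    chiTilde n μ (k ::ₘ s) =
      ∑ i, if k ≤ μ i then chiTilde n (Function.update μ i (μ i - k)) s else 0 := by
  unfold chiTilde
  rw [Multiset.map_cons, Multiset.prod_cons, mul_assoc, coeff_psum_mul]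

theorem sum_update_add {n : ℕ} (μ : Fin n → ℕ) (i : Fin n) (k : ℕ) (h : k ≤ μ i) :
    ∑ j, Function.update μ i (μ i - k) j + k = ∑ j, μ j := by
  rw [← Finset.add_sum_erase _ _ (Finset.mem_univ i),
    ← Finset.add_sum_erase Finset.univ μ (Finset.mem_univ i), Function.update_self]
  have : ∑ x ∈ Finset.univ.erase i, Function.update μ i (μ i - k) x =
      ∑ x ∈ Finset.univ.erase i, μ x :=
    Finset.sum_congr rfl fun x hx => Function.update_of_ne (Finset.ne_of_mem_erase hx) _ _
  rw [this]; omega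

theorem prod_update_split {n : ℕ} {R : Type} [CommRing R] (μ : Fin n → ℕ) (i : Fin n) (x : ℕ)
    (f : Fin n → ℕ → R) :
    ∏ j, f j (Function.update μ i x j) = f i x * ∏ j ∈ Finset.univ.erase i, f j (μ j) := by
  rw [← Finset.mul_prod_erase _ _ (Finset.mem_univ i), Function.update_self]
  congr 1
  exact Finset.prod_congr rfl fun x hx => by
    rw [Function.update_of_ne (Finset.ne_of_mem_erase hx)]

theorem mul_descFactorial_pred (a d : ℕ) (ha : 1 ≤ a) :
    (a : ℤ) * ((a - 1).descFactorial d : ℤ) = ((a : ℤ) - d) * (a.descFactorial d : ℤ) := by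
  obtain ⟨b, rfl⟩ : ∃ b, a = b + 1 := ⟨a - 1, by omega⟩
  simp only [Nat.add_sub_cancel]
  have h1 := Nat.succ_descFactorial_succ b d
  have h2 := Nat.descFactorial_succ (b + 1) d
  rw [h1] at h2
  rcases le_or_gt d (b + 1) with h | h
  · have := congrArg (Nat.cast : ℕ → ℤ) h2
    push_cast [Nat.cast_sub h] at this ⊢
    linarith
  · rw [Nat.descFactorial_of_lt (by omega), Nat.descFactorial_of_lt h]; simp

theorem coeff_pow_mul {n : ℕ} (d : Fin n → ℕ) (m : ℕ) (μ : Fin n → ℕ) :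
    MvPolynomial.coeff (Finsupp.equivFunOnFinite.symm μ)
      (((∑ i : Fin n, MvPolynomial.X i ^ 1) ^ m * ∏ i, MvPolynomial.X i ^ (d i) :
        MvPolynomial (Fin n) ℤ)) * ∏ i, ((μ i).factorial : ℤ) =
    if ∑ i, μ i = m + ∑ i, d i then (m.factorial : ℤ) * ∏ i, ((μ i).descFactorial (d i) : ℤ)
    else 0 := by
  induction m generalizing μ with
  | zero =>
    have hm : (∏ i, MvPolynomial.X i ^ (d i) : MvPolynomial (Fin n) ℤ) =
        MvPolynomial.monomial (Finsupp.equivFunOnFinite.symm d) 1 := by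
      rw [MvPolynomial.monomial_eq, Finsupp.prod_fintype]
      · simp
      · simp
    rw [pow_zero, one_mul, hm, MvPolynomial.coeff_monomial]
    simp only [EmbeddingLike.apply_eq_iff_eq, zero_add, Nat.factorial_zero, Nat.cast_one, one_mul]
    by_cases h : d = μ
    · subst h; simp [Nat.descFactorial_self]
    · rw [if_neg h, zero_mul]
      split_ifs with hs
      · by_contra hne
        apply h
        have hle : ∀ i ∈ Finset.univ, d i ≤ μ i := by
          intro i _
          by_contra hlt
          apply hne
          rw [Finset.prod_eq_zero (Finset.mem_univ i)]
          rw [Nat.descFactorial_of_lt (by omega)]; rfl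
        have := (Finset.sum_eq_sum_iff_of_le hle).1 hs.symm
        funext i
        exact this i (Finset.mem_univ i)
      · rfl
  | succ m ih =>
    rw [pow_succ', mul_assoc, coeff_psum_mul, Finset.sum_mul]
    have step : ∀ i, (if 1 ≤ μ i then MvPolynomial.coeff
        (Finsupp.equivFunOnFinite.symm (Function.update μ i (μ i - 1)))
        (((∑ i : Fin n, MvPolynomial.X i ^ 1) ^ m * ∏ i, MvPolynomial.X i ^ (d i) :
        MvPolynomial (Fin n) ℤ)) else 0) * ∏ i, ((μ i).factorial : ℤ) =
        if ∑ i, μ i = (m + 1) + ∑ i, d i then (m.factorial : ℤ) * (((μ i : ℤ) - d i) *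
          ∏ i, ((μ i).descFactorial (d i) : ℤ)) else 0 := by
      intro i
      by_cases hi : 1 ≤ μ i
      · rw [if_pos hi]
        have hs := sum_update_add μ i 1 hi
        have ih' := ih (Function.update μ i (μ i - 1))
        rw [prod_update_split μ i _ (fun _ x => (x.factorial : ℤ)),
          prod_update_split μ i _ (fun j x => (x.descFactorial (d j) : ℤ))] at ih'
        have hf : ∏ i, ((μ i).factorial : ℤ) = (μ i : ℤ) * (((μ i - 1).factorial : ℤ) *
            ∏ j ∈ Finset.univ.erase i, ((μ j).factorial : ℤ)) := by
          rw [← Finset.mul_prod_erase _ _ (Finset.mem_univ i), ← mul_assoc,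
            ← Nat.mul_factorial_pred (by omega : μ i ≠ 0)]
          push_cast; rfl
        have hd : ∏ i, ((μ i).descFactorial (d i) : ℤ) = ((μ i).descFactorial (d i) : ℤ) *
            ∏ j ∈ Finset.univ.erase i, ((μ j).descFactorial (d j) : ℤ) := by
          rw [← Finset.mul_prod_erase _ _ (Finset.mem_univ i)]
        rw [hf, mul_left_comm, ih', hd]
        have hiff : (∑ j, Function.update μ i (μ i - 1) j = m + ∑ i, d i) ↔
          (∑ i, μ i = (m + 1) + ∑ i, d i) := by omega
        simp only [hiff]
        split_ifs
        · have := mul_descFactorial_pred (μ i) (d i) hi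
          linear_combination (m.factorial : ℤ) *
            (∏ j ∈ Finset.univ.erase i, ((μ j).descFactorial (d j) : ℤ)) * this
        · simp
      · rw [if_neg hi, zero_mul]
        have h0 : μ i = 0 := by omega
        split_ifs
        · by_cases hd : d i = 0
          · simp [h0, hd]
          · have : ∏ i, ((μ i).descFactorial (d i) : ℤ) = 0 := by
              rw [Finset.prod_eq_zero (Finset.mem_univ i)]
              rw [Nat.descFactorial_of_lt (by omega)]; rfl
            rw [this]; simp
        · rfl
    rw [Finset.sum_congr rfl fun i _ => step i]
    split_ifs with hs
    · rw [← Finset.mul_sum, ← Finset.sum_mul, Finset.sum_sub_distrib]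
      have := congrArg (Nat.cast : ℕ → ℤ) hs
      push_cast at this
      rw [this, Nat.factorial_succ]
      push_cast
      ring
    · simp

noncomputable def DD {n : ℕ} (μ : Fin n → ℕ) : ℤ :=
  ∑ w : Equiv.Perm (Fin n), (Equiv.Perm.sign w : ℤ) *
    ∏ i, ((μ i).descFactorial (n - 1 - (w i : ℕ)) : ℤ)

theorem chi_ones (n m : ℕ) (μ : Fin n → ℕ) :
    chiTilde n μ (Multiset.replicate m 1) * ∏ i, ((μ i).factorial : ℤ) =
      if ∑ i, μ i = m + ∑ i : Fin n, (n - 1 - (i : ℕ)) then (m.factorial : ℤ) * DD μ else 0 := by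
  unfold chiTilde DD
  rw [Multiset.map_replicate, Multiset.prod_replicate, Finset.mul_sum, MvPolynomial.coeff_sum,
    Finset.sum_mul]
  have step : ∀ w : Equiv.Perm (Fin n), MvPolynomial.coeff (Finsupp.equivFunOnFinite.symm μ)
      (((∑ i : Fin n, MvPolynomial.X i ^ 1) ^ m * (MvPolynomial.C ((Equiv.Perm.sign w : ℤ)) *
        ∏ i, MvPolynomial.X i ^ (n - 1 - ((w i : ℕ)))) :
        MvPolynomial (Fin n) ℤ)) * ∏ i, ((μ i).factorial : ℤ) =
      if ∑ i, μ i = m + ∑ i : Fin n, (n - 1 - (i : ℕ)) then (m.factorial : ℤ) *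
        ((Equiv.Perm.sign w : ℤ) * ∏ i, ((μ i).descFactorial (n - 1 - (w i : ℕ)) : ℤ)) else 0 := by
    intro w
    rw [mul_left_comm, MvPolynomial.coeff_C_mul, mul_assoc, coeff_pow_mul,
      Equiv.sum_comp w (fun i : Fin n => n - 1 - (i : ℕ))]
    split_ifs
    · ring
    · simp
  rw [Finset.sum_congr rfl fun w _ => step w]
  split_ifs
  · rw [Finset.mul_sum]
  · simp

theorem chi_not_injective (n : ℕ) (μ : Fin n → ℕ) (s : Multiset ℕ)
    (h : ¬ Function.Injective μ) : chiTilde n μ s = 0 := by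
  simp only [Function.Injective, not_forall] at h
  obtain ⟨a, b, hab, hne⟩ := h
  set σ := Equiv.swap a b with hσ
  set Q : MvPolynomial (Fin n) ℤ :=
    (Multiset.map (fun m => ∑ i : Fin n, MvPolynomial.X i ^ m) s).prod *
      ∑ w : Equiv.Perm (Fin n),
        MvPolynomial.C ((Equiv.Perm.sign w : ℤ)) *
          ∏ i : Fin n, MvPolynomial.X i ^ (n - 1 - ((w i : ℕ))) with hQ
  have hren : MvPolynomial.rename σ Q = -Q := by
    rw [hQ, map_mul, map_multiset_prod, Multiset.map_map, ← mul_neg]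
    congr 1
    · congr 1
      refine Multiset.map_congr rfl fun m _ => ?_
      simp only [Function.comp, map_sum, map_pow, MvPolynomial.rename_X]
      exact Equiv.sum_comp σ (fun i => (MvPolynomial.X i : MvPolynomial (Fin n) ℤ) ^ m)
    · rw [map_sum, ← Finset.sum_neg_distrib]
      rw [← Equiv.sum_comp (Equiv.mulRight σ)]
      refine Finset.sum_congr rfl fun w _ => ?_
      simp only [Equiv.coe_mulRight, map_mul, map_prod, map_pow, MvPolynomial.rename_X,
        MvPolynomial.rename_C, Equiv.Perm.mul_apply, Equiv.Perm.sign_swap hne, hσ]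
      rw [← Equiv.prod_comp σ (fun i => (MvPolynomial.X i : MvPolynomial (Fin n) ℤ) ^
        (n - 1 - ((w i : ℕ))))]
      simp [hσ]
  have hcoef := MvPolynomial.coeff_rename_mapDomain σ σ.injective Q
    (Finsupp.equivFunOnFinite.symm μ)
  have hμ : Finsupp.mapDomain σ (Finsupp.equivFunOnFinite.symm μ) =
      Finsupp.equivFunOnFinite.symm μ := by
    ext i
    rw [show i = σ (σ i) by simp [hσ], Finsupp.mapDomain_apply σ.injective]
    simp only [hσ, Equiv.swap_apply_self, Finsupp.equivFunOnFinite_symm_apply_apply]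
    by_cases h1 : i = a
    · subst h1; simp [hab]
    · by_cases h2 : i = b
      · subst h2; simp [hab]
      · rw [Equiv.swap_apply_of_ne_of_ne h1 h2]
  rw [hren, hμ, MvPolynomial.coeff_neg] at hcoef
  change MvPolynomial.coeff (Finsupp.equivFunOnFinite.symm μ) Q = 0
  omega

theorem DD_eq {n : ℕ} (μ : Fin n → ℕ) :
    DD μ = (Equiv.Perm.sign (Fin.revPerm : Equiv.Perm (Fin n)) : ℤ) *
      (Matrix.vandermonde (fun i => (μ i : ℤ))).det := by
  rw [Matrix.det_eval_matrixOfPolynomials_eq_det_vandermonde (fun i => (μ i : ℤ))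
    (fun j : Fin n => descPochhammer ℤ j) (fun i => descPochhammer_natDegree ℤ i)
    (fun i => monic_descPochhammer ℤ i)]
  have hp := Matrix.det_permute' (Fin.revPerm : Equiv.Perm (Fin n))
    (Matrix.of fun i j : Fin n => Polynomial.eval (μ i : ℤ) (descPochhammer ℤ j))
  rw [Int.cast_id] at hp
  rw [← hp, Matrix.det_apply']
  unfold DD
  rw [← Equiv.sum_comp (Equiv.inv (Equiv.Perm (Fin n)))]
  refine Finset.sum_congr rfl fun w _ => ?_
  congr 1
  · simp
  · rw [← Equiv.prod_comp w]
    refine Finset.prod_congr rfl fun i _ => ?_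
    have hw : w⁻¹ (w i) = i := by simp
    simp only [Equiv.inv_apply, hw, Matrix.submatrix_apply, Matrix.of_apply,
      id, Fin.revPerm_apply, Fin.val_rev, descPochhammer_eval_eq_descFactorial]
    congr 2
    omega

theorem vand_split {n : ℕ} (v : Fin n → ℤ) (i : Fin n) :
    ∃ K : ℤ, ∀ x, (Matrix.vandermonde (Function.update v i x)).det =
      K * ∏ j ∈ Finset.univ.erase i, (x - v j) := by
  refine ⟨(∏ a ∈ Finset.univ.erase i, ∏ b ∈ Finset.univ.erase i,
    (if a < b then v b - v a else 1)) * ∏ j ∈ Finset.univ.erase i, (if i < j then -1 else 1),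
    fun x => ?_⟩
  rw [Matrix.det_vandermonde]
  have h1 : ∀ a : Fin n, ∏ j ∈ Finset.Ioi a, (Function.update v i x j - Function.update v i x a) =
      ∏ j, (if a < j then Function.update v i x j - Function.update v i x a else 1) := by
    intro a
    rw [← Finset.prod_filter]
    congr 1
    ext j; simp
  rw [Finset.prod_congr rfl fun a _ => h1 a, ← Finset.mul_prod_erase _ _ (Finset.mem_univ i)]
  rw [← Finset.mul_prod_erase Finset.univ (fun j => (if i < j then Function.update v i x j -
    Function.update v i x i else 1)) (Finset.mem_univ i)]
  have h2 : ∀ a ∈ Finset.univ.erase i, ∏ j, (if a < j then Function.update v i x j -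
      Function.update v i x a else 1) = (if a < i then x - v a else 1) *
      ∏ b ∈ Finset.univ.erase i, (if a < b then v b - v a else 1) := by
    intro a ha
    rw [← Finset.mul_prod_erase _ _ (Finset.mem_univ i), Function.update_self,
      Function.update_of_ne (Finset.ne_of_mem_erase ha)]
    congr 1
    refine Finset.prod_congr rfl fun b hb => ?_
    rw [Function.update_of_ne (Finset.ne_of_mem_erase hb)]
  have h3 : (∏ j ∈ Finset.univ.erase i, (if i < j then Function.update v i x j -
      Function.update v i x i else 1)) * (∏ j ∈ Finset.univ.erase i, (if j < i then x - v j else 1)) =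
      (∏ j ∈ Finset.univ.erase i, (if i < j then (-1 : ℤ) else 1)) *
        ∏ j ∈ Finset.univ.erase i, (x - v j) := by
    rw [← Finset.prod_mul_distrib, ← Finset.prod_mul_distrib]
    refine Finset.prod_congr rfl fun j hj => ?_
    have hj' := Finset.ne_of_mem_erase hj
    rw [Function.update_of_ne hj', Function.update_self]
    rcases lt_or_gt_of_ne hj' with h | h
    · simp [h, not_lt.2 h.le]
    · simp [h, not_lt.2 h.le]
  rw [Finset.prod_congr rfl h2, Finset.prod_mul_distrib, if_neg (lt_irrefl i), one_mul]
  linear_combination (∏ a ∈ Finset.univ.erase i, ∏ b ∈ Finset.univ.erase i,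
    (if a < b then v b - v a else 1)) * h3

theorem DD_ratio {n : ℕ} (μ : Fin n → ℕ) (i : Fin n) (y : ℕ) :
    DD (Function.update μ i y) * ∏ j ∈ Finset.univ.erase i, ((μ i : ℤ) - μ j) =
      DD μ * ∏ j ∈ Finset.univ.erase i, ((y : ℤ) - μ j) := by
  obtain ⟨K, hK⟩ := vand_split (fun j => (μ j : ℤ)) i
  have e1 : (fun j => ((Function.update μ i y j : ℕ) : ℤ)) =
      Function.update (fun j => (μ j : ℤ)) i (y : ℤ) := by
    funext j
    by_cases h : j = i
    · subst h; simp
    · simp [Function.update_of_ne h]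
  have e2 := hK (μ i : ℤ)
  rw [Function.update_eq_self i (fun j => (μ j : ℤ))] at e2
  rw [DD_eq, DD_eq, e1, hK, e2]
  ring

theorem chi_ratio (n m k : ℕ) (μ : Fin n → ℕ) (i : Fin n) (hk : k ≤ μ i) (hm : k ≤ m) :
    (m.descFactorial k : ℤ) *
      chiTilde n (Function.update μ i (μ i - k)) (Multiset.replicate (m - k) 1) *
      ∏ j ∈ Finset.univ.erase i, ((μ i : ℤ) - μ j) =
    chiTilde n μ (Multiset.replicate m 1) * ((μ i).descFactorial k : ℤ) *
      ∏ j ∈ Finset.univ.erase i, ((μ i : ℤ) - k - μ j) := by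
  have h1 := chi_ones n (m - k) (Function.update μ i (μ i - k))
  have h2 := chi_ones n m μ
  have hs := sum_update_add μ i k hk
  rw [prod_update_split μ i _ (fun _ x => (x.factorial : ℤ))] at h1
  rw [← Finset.mul_prod_erase _ _ (Finset.mem_univ i)] at h2
  have hiff : (∑ j, Function.update μ i (μ i - k) j = m - k + ∑ i : Fin n, (n - 1 - (i : ℕ))) ↔
    (∑ i, μ i = m + ∑ i : Fin n, (n - 1 - (i : ℕ))) := by omega
  simp only [hiff] at h1
  have hpos : (((μ i - k).factorial : ℤ) * ∏ j ∈ Finset.univ.erase i, ((μ j).factorial : ℤ)) ≠ 0 :=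
    mul_ne_zero (by exact_mod_cast Nat.factorial_ne_zero _)
      (Finset.prod_ne_zero_iff.2 fun j _ => by exact_mod_cast Nat.factorial_ne_zero _)
  have hfac : ((μ i).factorial : ℤ) = ((μ i - k).factorial : ℤ) * ((μ i).descFactorial k : ℤ) := by
    exact_mod_cast (Nat.factorial_mul_descFactorial hk).symm
  have hfacm : (m.factorial : ℤ) = ((m - k).factorial : ℤ) * (m.descFactorial k : ℤ) := by
    exact_mod_cast (Nat.factorial_mul_descFactorial hm).symm
  have hD := DD_ratio μ i (μ i - k)
  push_cast [Nat.cast_sub hk] at hD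
  apply mul_right_cancel₀ hpos
  rw [hfac] at h2
  split_ifs at h1 h2 with hc
  · rw [hfacm] at h2
    linear_combination (m.descFactorial k : ℤ) *
      (∏ j ∈ Finset.univ.erase i, ((μ i : ℤ) - μ j)) * h1 -
      (∏ j ∈ Finset.univ.erase i, ((μ i : ℤ) - k - μ j)) * h2 +
      (m.descFactorial k : ℤ) * ((m - k).factorial : ℤ) * hD
  · linear_combination (m.descFactorial k : ℤ) *
      (∏ j ∈ Finset.univ.erase i, ((μ i : ℤ) - μ j)) * h1 -
      (∏ j ∈ Finset.univ.erase i, ((μ i : ℤ) - k - μ j)) * h2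

theorem resPoly_eval {n : ℕ} (μ : Fin n → ℕ) (k : ℕ) (i : Fin n) :
    (resPoly μ k).eval (μ i : ℚ) = -(k : ℚ) * ((μ i).descFactorial k : ℚ) *
      ∏ j ∈ Finset.univ.erase i, ((μ i : ℚ) - k - μ j) := by
  unfold resPoly
  rw [Polynomial.eval_mul, Polynomial.eval_prod, Polynomial.eval_prod,
    ← Finset.mul_prod_erase _ _ (Finset.mem_univ i)]
  simp only [Polynomial.eval_sub, Polynomial.eval_X, Polynomial.eval_natCast, sub_self, zero_sub]
  have h : ∏ j ∈ Finset.range k, ((μ i : ℚ) - (j : ℚ)) = ((μ i).descFactorial k : ℚ) := by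
    rw [← descPochhammer_eval_eq_descFactorial ℚ, descPochhammer_eval_eq_prod_range]
  rw [h, Finset.prod_congr rfl fun j _ => sub_right_comm (μ i : ℚ) (μ j : ℚ) (k : ℚ)]
  ring

theorem main_induction (n : ℕ) (hn : 0 < n) (l : ℕ) : ∀ (m : ℕ) (μ : Fin n → ℕ)
    (k : Fin l → ℕ) (_ : ∑ r, k r ≤ m),
    (-1 : ℚ) ^ l * (Nat.descFactorial m (∑ r, k r) : ℚ) * (∏ r, (k r : ℚ)) *
        (chiTilde n μ
          (Multiset.map k Finset.univ.val +
            Multiset.replicate (m - ∑ r, k r) 1) : ℚ) =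
      (chiTilde n μ (Multiset.replicate m 1) : ℚ) * RR l μ k := by
  induction l with
  | zero =>
    intro m μ k _
    have : RR 0 μ k = 1 := by
      unfold RR Gexp
      simp; rfl
    simp [this]
  | succ l ih =>
    intro m μ k hK
    by_cases hμ : Function.Injective μ
    swap
    · rw [chi_not_injective n μ _ hμ, chi_not_injective n μ _ hμ]; simp
    rw [Fin.sum_univ_succ] at hK
    set k' : Fin l → ℕ := fun r => k r.succ with hk'
    set K' := ∑ r, k' r with hK'
    have hmap : Multiset.map k Finset.univ.val = k 0 ::ₘ Multiset.map k' Finset.univ.val := by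
      rw [Fin.univ_val_map, Fin.univ_val_map, List.ofFn_succ]; rfl
    have hsum : ∑ r, k r = k 0 + K' := Fin.sum_univ_succ k
    have hprod : ∏ r, (k r : ℚ) = (k 0 : ℚ) * ∏ r, (k' r : ℚ) := Fin.prod_univ_succ _
    rw [RR_succ l hn μ hμ k, hmap, Multiset.cons_add, chi_cons, hsum, hprod, Int.cast_sum,
      Finset.mul_sum, Finset.mul_sum]
    refine Finset.sum_congr rfl fun i _ => ?_
    by_cases hki : k 0 ≤ μ i
    swap
    · simp [hki]
    rw [if_pos hki, if_pos hki]
    have ih' := ih (m - k 0) (Function.update μ i (μ i - k 0)) k' (by omega)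
    rw [← hK', Nat.sub_sub] at ih'
    have hdesc : (m.descFactorial (k 0 + K') : ℚ) =
        (m.descFactorial (k 0) : ℚ) * ((m - k 0).descFactorial K' : ℚ) := by
      have := Nat.descFactorial_mul_descFactorial (n := m) (show k 0 ≤ k 0 + K' by omega)
      rw [Nat.add_sub_cancel_left] at this
      rw [← this]; push_cast; ring
    have hr := congrArg (Int.cast : ℤ → ℚ) (chi_ratio n m (k 0) μ i hki (by omega))
    push_cast at hr
    have hne : ∏ j ∈ Finset.univ.erase i, ((μ i : ℚ) - μ j) ≠ 0 :=
      Finset.prod_ne_zero_iff.2 fun j hj => sub_ne_zero.2 fun h =>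
        Finset.ne_of_mem_erase hj (hμ (Nat.cast_injective h)).symm
    rw [resPoly_eval, Finset.prod_inv_distrib, hdesc]
    set A := ∏ j ∈ Finset.univ.erase i, ((μ i : ℚ) - μ j) with hA
    apply mul_left_cancel₀ hne
    have hAA : A * A⁻¹ = 1 := mul_inv_cancel₀ hne
    set B := ∏ j ∈ Finset.univ.erase i, ((μ i : ℚ) - k 0 - μ j) with hB
    rw [pow_succ]
    linear_combination (-A * (k 0 : ℚ) * (m.descFactorial (k 0) : ℚ)) * ih' -
      (k 0 : ℚ) * RR l (Function.update μ i (μ i - k 0)) k' * hr +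
      (chiTilde n μ (Multiset.replicate m 1) : ℚ) * (k 0 : ℚ) * ((μ i).descFactorial (k 0) : ℚ) *
      B * RR l (Function.update μ i (μ i - k 0)) k' * hAA

/-- key lemma for the generalized Frobenius formula: for any tuple `μ` of
non-negative integers and positive integers `k₁,…,k_l` with `K = k₁+⋯+k_l ≤ n`,
`(-1)^l (n)_K k₁⋯k_l χ̃^μ_{(k₁,…,k_l,1^{n-K})} = χ̃^μ_{(1^n)} ⋅
[z₁^{-1}]⋯[z_l^{-1}] [∏_r H̃_μ(z_r)⋯H̃_μ(z_r-k_r+1) ⋅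
∏_{s<t} (z_s-z_t)(z_s-z_t+k_t-k_s)/((z_s-z_t-k_s)(z_s-z_t+k_t))]`. -/
theorem frobenius_formula_lemma (n : ℕ) (μ : Fin n → ℕ)
    (l : ℕ) (k : Fin l → ℕ) (hk : ∀ r, 1 ≤ k r)
    (hK : ∑ r, k r ≤ n) :
    (-1 : ℚ) ^ l * (Nat.descFactorial n (∑ r, k r) : ℚ) * (∏ r, (k r : ℚ)) *
        (chiTilde n μ
          (Multiset.map k Finset.univ.val +
            Multiset.replicate (n - ∑ r, k r) 1) : ℚ) =
      (chiTilde n μ (Multiset.replicate n 1) : ℚ) *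
        extractInv l
          ((∏ r : Fin l, ∏ j ∈ Finset.range (k r),
              HtildeOf n μ (zVar l r - (j : ItLT l))) *
            ∏ p ∈ Finset.univ.filter (fun p : Fin l × Fin l => p.1 < p.2),
              ((zVar l p.1 - zVar l p.2) *
                  (zVar l p.1 - zVar l p.2 + (k p.2 : ItLT l) - (k p.1 : ItLT l))) /
                ((zVar l p.1 - zVar l p.2 - (k p.1 : ItLT l)) *
                  (zVar l p.1 - zVar l p.2 + (k p.2 : ItLT l)))) := by
  rw [expr_eq]
  rcases Nat.eq_zero_or_pos n with hn | hn
  · have hl : l = 0 := by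
      rcases Nat.eq_zero_or_pos l with h | h
      · exact h
      · have h1 := Finset.single_le_sum (f := k) (fun i _ => Nat.zero_le _)
          (Finset.mem_univ (⟨0, h⟩ : Fin l))
        have h2 := hk ⟨0, h⟩
        omega
    subst hl
    have : extractInv 0 (Gexp 0 (fun r => zVar 0 r) μ k) = 1 := by
      unfold Gexp
      simp; rfl
    rw [this]
    simp
  · exact main_induction n hn l n μ k hK
end

section
/- Let p, q be positive integers and let λ be the rectangular partition p × q consisting of p parts all equal to q (a partition of n = pq). Then its reciprocal Cauchy transform equals H(z) = (z−q)(z+p)/(z+p−q), and consequently, for every real ζ ≥ 0, the shifted Boolean cumulants of λ with respect to the shift ζ are given by B̃_i = −pq·(q−p−ζ)^{i−2} for every integer i ≥ 2. -/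
open scoped BigOperators

/-- The shifted Boolean cumulant `B̃_k` (with respect to the shift `ζ`) of a partition
`λ` of `n`: the coefficient of `z^{-(k-1)}` in the expansion at infinity
`H(z+ζ) = z + ζ + B̃₂ z^{-1} + ⋯` of the reciprocal Cauchy transform
`H(z) = (z+n) ⋅ ∏ᵢ (z-λᵢ+i-1) / ∏ᵢ (z-λᵢ+i)` (1-indexed products), computed in the
field of formal Laurent series in `X = z⁻¹`. -/
noncomputable def shiftedBoolean (n : ℕ) (lam : Fin n → ℕ) (ζ : ℝ) (k : ℕ) : ℝ :=
  let X : LaurentSeries ℝ := HahnSeries.single (1 : ℤ) (1 : ℝ)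
  let w : LaurentSeries ℝ := X⁻¹ + (HahnSeries.C ζ : LaurentSeries ℝ)
  HahnSeries.coeff
    ((w + (n : LaurentSeries ℝ)) *
        (∏ i : Fin n, (w - (lam i : LaurentSeries ℝ) + ((i : ℕ) : LaurentSeries ℝ))) /
      ∏ i : Fin n, (w - (lam i : LaurentSeries ℝ) + ((i : ℕ) : LaurentSeries ℝ) + 1))
    ((k : ℤ) - 1)

theorem telescope_aux {K : Type*} [Field K] (y : K) (hy : ∀ m : ℕ, y + m ≠ 0) (k : ℕ) :
    ∏ i ∈ Finset.range k, ((y + (i : K)) / (y + (i : K) + 1)) = y / (y + k) := by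
  induction k with
  | zero =>
    have := hy 0
    simp at this
    simp [this]
  | succ k ih =>
    rw [Finset.prod_range_succ, ih]
    have h1 := hy k
    have h2 := hy (k + 1)
    push_cast at h2 ⊢
    rw [← add_assoc] at h2 ⊢
    field_simp

theorem rect_aux {K : Type*} [Field K] (x : K) (hx : ∀ m : ℤ, x + m ≠ 0)
    (p q : ℕ) (hq : 1 ≤ q) :
    (x + ((p * q : ℕ) : K)) *
          (∏ i : Fin (p * q), (x - ((if (i : ℕ) < p then q else 0 : ℕ) : K) + ((i : ℕ) : K))) /
        (∏ i : Fin (p * q), (x - ((if (i : ℕ) < p then q else 0 : ℕ) : K) + ((i : ℕ) : K) + 1)) =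
      (x - (q : K)) * (x + (p : K)) / (x + (p : K) - (q : K)) := by
  rw [mul_div_assoc, ← Finset.prod_div_distrib]
  rw [Fin.prod_univ_eq_prod_range (fun i : ℕ =>
    (x - ((if i < p then q else 0 : ℕ) : K) + (i : K)) /
      (x - ((if i < p then q else 0 : ℕ) : K) + (i : K) + 1)) (p * q)]
  obtain ⟨m, hm⟩ : ∃ m, p * q = p + m := ⟨p * q - p, by
    have := Nat.mul_le_mul_left p hq
    omega⟩
  rw [hm, Finset.prod_range_add]
  have e1 : ∏ i ∈ Finset.range p, ((x - ((if i < p then q else 0 : ℕ) : K) + (i : K)) /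
      (x - ((if i < p then q else 0 : ℕ) : K) + (i : K) + 1)) = (x - q) / (x - q + p) := by
    rw [← telescope_aux (x - (q : K))]
    · refine Finset.prod_congr rfl fun i hi => ?_
      rw [if_pos (Finset.mem_range.1 hi)]
    · intro m
      have := hx (m - q)
      push_cast at this
      intro h
      exact this (by rw [← h]; ring)
  have e2 : ∏ i ∈ Finset.range m, ((x - ((if p + i < p then q else 0 : ℕ) : K) + ((p + i : ℕ) : K)) /
      (x - ((if p + i < p then q else 0 : ℕ) : K) + ((p + i : ℕ) : K) + 1))
        = (x + p) / (x + p + m) := by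
    rw [← telescope_aux (x + (p : K))]
    · refine Finset.prod_congr rfl fun i hi => ?_
      rw [if_neg (by omega)]
      push_cast
      rw [sub_zero, ← add_assoc]
    · intro m
      have := hx (p + m)
      push_cast at this
      rwa [add_assoc]
  rw [e1, e2]
  have h1 := hx (p + m)
  have h2 := hx (p - q)
  push_cast at h1 h2 ⊢
  rw [← add_assoc] at h1 ⊢
  have h3 : x - (q : K) + p ≠ 0 := by
    intro h
    exact h2 (by rw [← h]; ring)
  have h4 : x + (p : K) - q = x - q + p := by ring
  rw [h4]
  field_simp

theorem ratfunc_aux (m : ℤ) : (RatFunc.X : RatFunc ℚ) + (m : RatFunc ℚ) ≠ 0 := by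
  have h : (RatFunc.X : RatFunc ℚ) + (m : RatFunc ℚ) =
      algebraMap (Polynomial ℚ) (RatFunc ℚ) (Polynomial.X + Polynomial.C (m : ℚ)) := by
    simp
  rw [h]
  exact RatFunc.algebraMap_ne_zero (Polynomial.X_add_C_ne_zero _)

theorem intCast_laurent (m : ℤ) : (m : LaurentSeries ℝ) = HahnSeries.C (m : ℝ) := by
  simp

theorem laurent_aux (ζ : ℝ) (m : ℤ) :
    (HahnSeries.single (1 : ℤ) (1 : ℝ) : LaurentSeries ℝ)⁻¹ + HahnSeries.C ζ +
      (m : LaurentSeries ℝ) ≠ 0 := by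
  intro h
  have := congrArg (fun f : LaurentSeries ℝ => f.coeff (-1)) h
  rw [intCast_laurent, HahnSeries.C_apply, HahnSeries.C_apply] at this
  simp [HahnSeries.inv_single, -map_intCast] at this

theorem geom_aux (c : ℝ) :
    ((HahnSeries.single (1 : ℤ) (1 : ℝ) : LaurentSeries ℝ)⁻¹ - HahnSeries.C c) *
      HahnSeries.ofPowerSeries ℤ ℝ (PowerSeries.X * PowerSeries.mk fun n => c ^ n) = 1 := by
  have hX : (HahnSeries.single (1 : ℤ) (1 : ℝ) : LaurentSeries ℝ) ≠ 0 := by simp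
  have h : (1 - PowerSeries.C c * PowerSeries.X) * (PowerSeries.mk fun n => c ^ n) = 1 := by
    ext n
    cases n with
    | zero => simp [sub_mul]
    | succ n =>
      simp [sub_mul, mul_assoc, PowerSeries.coeff_succ_X_mul, PowerSeries.coeff_one, pow_succ']
  have h' := congrArg (HahnSeries.ofPowerSeries ℤ ℝ) h
  simp only [map_mul, map_sub, map_one, HahnSeries.ofPowerSeries_C,
    HahnSeries.ofPowerSeries_X] at h' ⊢
  rw [← h', ← mul_assoc, sub_mul, inv_mul_cancel₀ hX]

/-- for the rectangular Young diagram `p × q` (i.e. `p` parts equal to `q`,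
a partition of `n = pq`), the reciprocal Cauchy transform is
`H(z) = (z-q)(z+p)/(z+p-q)` (an identity of rational functions), and for every shift
`ζ ≥ 0` the shifted Boolean cumulants are `B̃ᵢ = -pq (q-p-ζ)^{i-2}` for `i ≥ 2`. -/
theorem rectangular_cumulants (p q : ℕ) (hp : 1 ≤ p) (hq : 1 ≤ q) :
    (((RatFunc.X : RatFunc ℚ) + ((p * q : ℕ) : RatFunc ℚ)) *
          (∏ i : Fin (p * q),
            ((RatFunc.X : RatFunc ℚ) -
                  ((if (i : ℕ) < p then q else 0 : ℕ) : RatFunc ℚ) +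
                ((i : ℕ) : RatFunc ℚ))) /
        (∏ i : Fin (p * q),
          ((RatFunc.X : RatFunc ℚ) -
                ((if (i : ℕ) < p then q else 0 : ℕ) : RatFunc ℚ) +
              ((i : ℕ) : RatFunc ℚ) + 1)) =
      ((RatFunc.X : RatFunc ℚ) - (q : RatFunc ℚ)) * ((RatFunc.X : RatFunc ℚ) + (p : RatFunc ℚ)) /
        ((RatFunc.X : RatFunc ℚ) + (p : RatFunc ℚ) - (q : RatFunc ℚ))) ∧
    (∀ ζ : ℝ, 0 ≤ ζ → ∀ i : ℕ, 2 ≤ i →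
      shiftedBoolean (p * q) (fun j : Fin (p * q) => if (j : ℕ) < p then q else 0) ζ i =
        -((p : ℝ) * q) * ((q : ℝ) - p - ζ) ^ (i - 2)) := by
  refine ⟨rect_aux _ ratfunc_aux p q hq, ?_⟩
  intro ζ _ i hi
  unfold shiftedBoolean
  dsimp only
  rw [rect_aux _ (laurent_aux ζ) p q hq]
  obtain ⟨n, rfl⟩ := Nat.exists_eq_add_of_le' hi
  have hg := geom_aux ((q : ℝ) - p - ζ)
  have hp' : (p : LaurentSeries ℝ) = HahnSeries.C (p : ℝ) := by simp
  have hq' : (q : LaurentSeries ℝ) = HahnSeries.C (q : ℝ) := by simp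
  have hne := laurent_aux ζ (p - q)
  have key : ((HahnSeries.single (1 : ℤ) (1 : ℝ) : LaurentSeries ℝ)⁻¹ + HahnSeries.C ζ - (q : LaurentSeries ℝ)) *
      ((HahnSeries.single (1 : ℤ) (1 : ℝ) : LaurentSeries ℝ)⁻¹ + HahnSeries.C ζ + (p : LaurentSeries ℝ)) /
      ((HahnSeries.single (1 : ℤ) (1 : ℝ) : LaurentSeries ℝ)⁻¹ + HahnSeries.C ζ + (p : LaurentSeries ℝ) - (q : LaurentSeries ℝ)) =
      (HahnSeries.single (1 : ℤ) (1 : ℝ) : LaurentSeries ℝ)⁻¹ + HahnSeries.C ζ -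
        HahnSeries.C ((p : ℝ) * q) * HahnSeries.ofPowerSeries ℤ ℝ
          (PowerSeries.X * PowerSeries.mk fun n => ((q : ℝ) - p - ζ) ^ n) := by
    rw [map_sub, map_sub, ← hp', ← hq'] at hg
    rw [map_mul, ← hp', ← hq']
    push_cast at hne
    rw [← add_sub_assoc] at hne
    rw [div_eq_iff hne]
    linear_combination (p * q : LaurentSeries ℝ) * hg
  rw [key]
  have hidx : (((n + 2 : ℕ) : ℤ) - 1) = ((n + 1 : ℕ) : ℤ) := by push_cast; ring
  rw [hidx, HahnSeries.coeff_sub, HahnSeries.coeff_add, HahnSeries.C_mul_eq_smul,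
    HahnSeries.coeff_smul, HahnSeries.ofPowerSeries_apply_coeff, PowerSeries.coeff_succ_X_mul,
    PowerSeries.coeff_mk, HahnSeries.inv_single, HahnSeries.C_apply,
    HahnSeries.coeff_single_of_ne (by push_cast; omega),
    HahnSeries.coeff_single_of_ne (by push_cast; omega)]
  simp
end

section
/- Let λ be a partition of n with reciprocal Cauchy transform H, let φ(z) = z·H(1/z) (a formal power series with constant term 1), and let Φ(x,u) = (1−ux)·φ(x/(1−ux)). Then for all integers k₁,…,k_l ≥ 1, (−1)^l · k₁⋯k_l · Σ^λ_{k₁,…,k_l} = [z₁^{k₁+1}]⋯[z_l^{k_l+1}] [ ( ∏_{r=1}^l ∏_{j=0}^{k_r−1} Φ(z_r, j) ) · ∏_{1≤s<t≤l} ( (z_t−z_s)(z_t−z_s+(k_t−k_s) z_s z_t) ) / ( (z_t−z_s−k_s z_s z_t)(z_t−z_s+k_t z_s z_t) ) ], where the coefficients are extracted iteratively: the expression is expanded as a formal power series in z_l with coefficients rational functions of z₁,…,z_{l−1}, the coefficient of z_l^{k_l+1} is taken, and the procedure is repeated with respect to z_{l−1}, …, z₁ (this formula is obtained from the generalized Frobenius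 formula by the substitution z_r ↦ 1/z_r). -/
open scoped BigOperators

/-- For a partition `λ` of `n` and a multiset `k` of positive integers, the irreducible
character value `Tr ρ^λ(k)`, defined via Frobenius' character formula. -/
noncomputable def frobChar (n : ℕ) (lam : Fin n → ℕ) (k : Multiset ℕ) : ℤ :=
  MvPolynomial.coeff
    (Finsupp.equivFunOnFinite.symm fun i : Fin n => lam i + (n - 1 - (i : ℕ)))
    ((Multiset.map (fun m => ∑ i : Fin n, MvPolynomial.X i ^ m) k).prod *
      ∑ w : Equiv.Perm (Fin n),
        MvPolynomial.C ((Equiv.Perm.sign w : ℤ)) *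
          ∏ i : Fin n, MvPolynomial.X i ^ (n - 1 - ((w i : ℕ))))

/-- The normalized character of a conjugacy class, as a rational number:
`Σ^λ_{k₁,…,k_l} = (n)_{k₁+⋯+k_l} ⋅ χ^λ(π)` where `π` has cycle type
`(k₁,…,k_l,1^{n-k₁-⋯-k_l})`; it vanishes by convention when `k₁+⋯+k_l > n`. -/
noncomputable def SigmaChar (n : ℕ) (lam : Fin n → ℕ) (k : Multiset ℕ) : ℚ :=
  if k.sum ≤ n then
    (Nat.descFactorial n k.sum : ℚ) *
      (frobChar n lam (k + Multiset.replicate (n - k.sum) 1) : ℚ) /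
      (frobChar n lam (Multiset.replicate n 1) : ℚ)
  else 0

/-- The reciprocal Cauchy transform `H` of the partition `λ` of `n`, evaluated (in any
field) at `w`: `H(w) = (w+n) ⋅ ∏_{i=1}^n (w-λᵢ+i-1) / ∏_{i=1}^n (w-λᵢ+i)`. -/
noncomputable def Hof (n : ℕ) (lam : Fin n → ℕ) {F : Type} [Field F] (w : F) : F :=
  (w + (n : F)) * (∏ i : Fin n, (w - (lam i : F) + ((i : ℕ) : F))) /
    ∏ i : Fin n, (w - (lam i : F) + ((i : ℕ) : F) + 1)

/-- `φ(z) = z ⋅ H(1/z)`, evaluated in any field. -/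
noncomputable def phiOf (n : ℕ) (lam : Fin n → ℕ) {F : Type} [Field F] (w : F) : F :=
  w * Hof n lam w⁻¹

/-- `Φ(x,u) = (1-ux) ⋅ φ(x/(1-ux))`, evaluated in any field. -/
noncomputable def PhiOf (n : ℕ) (lam : Fin n → ℕ) {F : Type} [Field F] (x u : F) : F :=
  (1 - u * x) * phiOf n lam (x / (1 - u * x))

/-- The variable `z_{r+1}` (for `0 ≤ r < l`), as an element of the `l`-th iterated
Laurent series field: it is the formal variable of the `(r+1)`-st level, so that
expansions at level `r+1` are formal (Laurent) series expansions in increasing powers of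
`z_{r+1}` with coefficients functions of `z_1, …, z_r`. -/
noncomputable def wVar : (l : ℕ) → ℕ → ItLT l
  | 0, _ => 0
  | l + 1, r =>
    if r = l then
      (show LaurentSeries (ItLT l) from HahnSeries.single (1 : ℤ) (1 : ItLT l))
    else
      (show LaurentSeries (ItLT l) from HahnSeries.C (wVar l r))

/-- Iterated coefficient extraction `[z₁^{k₁+1}] ⋯ [z_l^{k_l+1}]`: successively take the
coefficient of `z_j^{k_j+1}` in the expansion at level `j`, for `j = l, l-1, …, 1`
(`k r` stands for `k_{r+1}`). -/
noncomputable def extractPow : (l : ℕ) → (ℕ → ℕ) → ItLT l → ℚ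
  | 0, _, x => x
  | l + 1, k, f => extractPow l k ((show LaurentSeries (ItLT l) from f).coeff ((k l : ℤ) + 1))


namespace GFF

open Polynomial

/-- Coefficientwise ring hom on Laurent series. -/
noncomputable def lmap {R S : Type} [CommRing R] [CommRing S] (f : R →+* S) :
    LaurentSeries R →+* LaurentSeries S where
  toFun x := HahnSeries.map x f
  map_zero' := by ext; simp
  map_one' := by
    ext m
    simp only [HahnSeries.map_coeff, HahnSeries.coeff_one]
    split_ifs <;> simp
  map_add' x y := by ext; simp
  map_mul' x y := HahnSeries.map_mul (f := (f : R →ₙ+* S))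

@[simp] lemma lmap_coeff {R S : Type} [CommRing R] [CommRing S] (f : R →+* S)
    (x : LaurentSeries R) (m : ℤ) : (lmap f x).coeff m = f (x.coeff m) := rfl

lemma lmap_C {R S : Type} [CommRing R] [CommRing S] (f : R →+* S) (r : R) :
    lmap f (HahnSeries.C r) = HahnSeries.C (f r) := by
  ext m
  simp only [lmap_coeff, HahnSeries.C_apply, HahnSeries.coeff_single]
  split_ifs <;> simp

lemma lmap_single {R S : Type} [CommRing R] [CommRing S] (f : R →+* S) (m : ℤ) (r : R) :
    lmap f (HahnSeries.single m r) = HahnSeries.single m (f r) := by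
  ext m
  simp only [lmap_coeff, HahnSeries.coeff_single]
  split_ifs <;> simp

lemma lmap_inj {R S : Type} [CommRing R] [CommRing S] (f : R →+* S)
    (g : S →+* R) (h : ∀ x, g (f x) = x) (x : LaurentSeries R) : lmap g (lmap f x) = x := by
  ext m; simp [h]

lemma coeff_C_mul {R : Type} [CommRing R] (r : R) (x : LaurentSeries R) (m : ℤ) :
    (HahnSeries.C r * x).coeff m = r * x.coeff m := by
  simp [HahnSeries.C_apply]

lemma isUnit_one_sub {R : Type} [CommRing R] (c : R) :
    IsUnit (1 - HahnSeries.C c * HahnSeries.single (1 : ℤ) (1 : R) : LaurentSeries R) := by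
  have h : IsUnit (1 - PowerSeries.C c * PowerSeries.X : PowerSeries R) := by
    rw [PowerSeries.isUnit_iff_constantCoeff]; simp
  have := h.map (HahnSeries.ofPowerSeries ℤ R)
  simpa [HahnSeries.ofPowerSeries_C, HahnSeries.ofPowerSeries_X] using this

instance charZero_laurent {K : Type} [Field K] [CharZero K] : CharZero (LaurentSeries K) :=
  charZero_of_injective_ringHom (HahnSeries.C_injective (Γ := ℤ) (R := K))

/-- Iterated Laurent series over `ℚ[X]`. -/
noncomputable def ItP : ℕ → (T : Type) × CommRing T
  | 0 => ⟨ℚ[X], inferInstance⟩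
  | l + 1 =>
    haveI := (ItP l).2
    ⟨LaurentSeries (ItP l).1, inferInstance⟩

abbrev ItPT (l : ℕ) : Type := (ItP l).1

noncomputable instance (l : ℕ) : CommRing (ItPT l) := (ItP l).2

/-- the variable `1/z` -/
noncomputable def zinv : LaurentSeries ℚ := HahnSeries.single (-1 : ℤ) (1 : ℚ)

noncomputable def iot : (l : ℕ) → (ItPT l →+* ItLT (l + 1))
  | 0 => (show ℚ[X] →+* LaurentSeries ℚ from (Polynomial.aeval zinv).toRingHom)
  | l + 1 => (show LaurentSeries (ItPT l) →+* LaurentSeries (ItLT (l + 1)) from lmap (iot l))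

noncomputable def ev (a : ℚ) : (l : ℕ) → (ItPT l →+* ItLT l)
  | 0 => (show ℚ[X] →+* ℚ from Polynomial.evalRingHom a)
  | l + 1 => (show LaurentSeries (ItPT l) →+* LaurentSeries (ItLT l) from lmap (ev a l))

noncomputable def jj : (l : ℕ) → (ItLT l →+* ItPT l)
  | 0 => (show ℚ →+* ℚ[X] from Polynomial.C)
  | l + 1 => (show LaurentSeries (ItLT l) →+* LaurentSeries (ItPT l) from lmap (jj l))

noncomputable def cP : (l : ℕ) → (ℚ[X] →+* ItPT l)
  | 0 => (show ℚ[X] →+* ℚ[X] from RingHom.id _)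
  | l + 1 => (show ℚ[X] →+* LaurentSeries (ItPT l) from HahnSeries.C.comp (cP l))

noncomputable def emb : (l : ℕ) → (LaurentSeries ℚ →+* ItLT (l + 1))
  | 0 => (show LaurentSeries ℚ →+* LaurentSeries ℚ from RingHom.id _)
  | l + 1 => (show LaurentSeries ℚ →+* LaurentSeries (ItLT (l + 1)) from
      HahnSeries.C.comp (emb l))

noncomputable def extrP : (l : ℕ) → (ℕ → ℕ) → ItPT l → ℚ[X]
  | 0, _, x => x
  | l + 1, k, f => extrP l k ((show LaurentSeries (ItPT l) from f).coeff ((k l : ℤ) + 1))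

/-- constants of the next level -/
noncomputable def cL (l : ℕ) : ItLT l →+* ItLT (l + 1) :=
  (HahnSeries.C : ItLT l →+* LaurentSeries (ItLT l))

noncomputable def zL (l : ℕ) : ItLT (l + 1) :=
  (HahnSeries.single (1 : ℤ) (1 : ItLT l) : LaurentSeries (ItLT l))

noncomputable def cPP (l : ℕ) : ItPT l →+* ItPT (l + 1) :=
  (HahnSeries.C : ItPT l →+* LaurentSeries (ItPT l))

noncomputable def zP (l : ℕ) : ItPT (l + 1) :=
  (HahnSeries.single (1 : ℤ) (1 : ItPT l) : LaurentSeries (ItPT l))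

lemma wVar_lt (l r : ℕ) (h : r < l) : wVar (l + 1) r = cL l (wVar l r) := if_neg h.ne

lemma wVar_self (l : ℕ) : wVar (l + 1) l = zL l := if_pos rfl

lemma jj_cL (l : ℕ) (x : ItLT l) : jj (l + 1) (cL l x) = cPP l (jj l x) := lmap_C (jj l) x

lemma jj_zL (l : ℕ) : jj (l + 1) (zL l) = zP l :=
  (lmap_single (jj l) 1 1).trans (congrArg (HahnSeries.single (1 : ℤ)) (map_one (jj l)))

lemma iot_cPP (l : ℕ) (x : ItPT l) : iot (l + 1) (cPP l x) = cL (l + 1) (iot l x) :=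
  lmap_C (iot l) x

lemma iot_zP (l : ℕ) : iot (l + 1) (zP l) = zL (l + 1) :=
  (lmap_single (iot l) 1 1).trans (congrArg (HahnSeries.single (1 : ℤ)) (map_one (iot l)))

lemma ev_cPP (a : ℚ) (l : ℕ) (x : ItPT l) : ev a (l + 1) (cPP l x) = cL l (ev a l x) :=
  lmap_C (ev a l) x

lemma cP_succ (l : ℕ) (p : ℚ[X]) : cP (l + 1) p = cPP l (cP l p) := rfl

lemma emb_succ (l : ℕ) (p : LaurentSeries ℚ) : emb (l + 1) p = cL (l + 1) (emb l p) := rfl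

lemma ev_jj (a : ℚ) : ∀ (l : ℕ) (x : ItLT l), ev a l (jj l x) = x
  | 0, x => Polynomial.eval_C (R := ℚ) (x := a) (a := x)
  | l + 1, x => lmap_inj (jj l) (ev a l) (ev_jj a l) x

lemma iot_jj_wVar : ∀ (l r : ℕ), r < l → iot l (jj l (wVar l r)) = wVar (l + 1) (r + 1)
  | 0, r, h => absurd h (Nat.not_lt_zero _)
  | l + 1, r, h => by
    rcases Nat.lt_succ_iff_lt_or_eq.mp h with h' | h'
    · rw [wVar_lt l r h', wVar_lt (l + 1) (r + 1) (by omega), jj_cL, iot_cPP,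
        iot_jj_wVar l r h']
    · subst h'
      rw [wVar_self, wVar_self, jj_zL, iot_zP]

lemma emb_single : ∀ (l : ℕ), emb l (HahnSeries.single (1 : ℤ) (1 : ℚ)) = wVar (l + 1) 0
  | 0 => by rw [wVar_self]; rfl
  | l + 1 => by rw [wVar_lt (l + 1) 0 (by omega), ← emb_single l, emb_succ]

lemma iot_cP_X_emb : ∀ (l : ℕ), iot l (cP l X) = emb l zinv
  | 0 => Polynomial.aeval_X (R := ℚ) zinv
  | l + 1 => by rw [cP_succ, iot_cPP, iot_cP_X_emb l, emb_succ]

lemma zinv_eq : zinv = (HahnSeries.single (1 : ℤ) (1 : ℚ) : LaurentSeries ℚ)⁻¹ := by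
  refine eq_inv_of_mul_eq_one_left ?_
  rw [zinv, HahnSeries.single_mul_single]
  simp

lemma iot_cP_X (l : ℕ) : iot l (cP l X) = (wVar (l + 1) 0)⁻¹ := by
  rw [iot_cP_X_emb, ← emb_single, zinv_eq, map_inv₀]

lemma ev_cP (a : ℚ) : ∀ (l : ℕ) (p : ℚ[X]), ev a l (cP l p) = ((p.eval a : ℚ) : ItLT l)
  | 0, p => (Rat.cast_id (p.eval a)).symm
  | l + 1, p => by rw [cP_succ, ev_cPP, ev_cP a l, map_ratCast]

lemma isUnit_zP (l : ℕ) (c : ItPT l) : IsUnit (1 - cPP l c * zP l) := isUnit_one_sub c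

lemma isUnit_aux (c : ℚ[X]) : ∀ (l r : ℕ), r < l → IsUnit (1 - cP l c * jj l (wVar l r))
  | 0, r, h => absurd h (Nat.not_lt_zero _)
  | l + 1, r, h => by
    rcases Nat.lt_succ_iff_lt_or_eq.mp h with h' | h'
    · rw [wVar_lt l r h', jj_cL, cP_succ, ← map_mul, ← map_one (cPP l), ← map_sub]
      exact (isUnit_aux c l r h').map _
    · subst h'
      rw [wVar_self, jj_zL, cP_succ]
      exact isUnit_zP _ _

lemma one_sub_ne_zero (c : ℚ) (l r : ℕ) (h : r < l) : (1 - (c : ItLT l) * wVar l r) ≠ 0 := by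
  have := (isUnit_aux (Polynomial.C c) l r h).map (ev 0 l)
  rw [map_sub, map_mul, map_one, ev_cP, ev_jj, Polynomial.eval_C] at this
  exact this.ne_zero

lemma zL_ne_zero (l : ℕ) : zL l ≠ 0 :=
  HahnSeries.single_ne_zero (Γ := ℤ) (a := 1) (one_ne_zero (α := ItLT l))

lemma wVar_ne_zero : ∀ (l r : ℕ), r < l → wVar l r ≠ 0
  | 0, r, h => absurd h (Nat.not_lt_zero _)
  | l + 1, r, h => by
    rcases Nat.lt_succ_iff_lt_or_eq.mp h with h' | h'
    · rw [wVar_lt l r h', _root_.map_ne_zero]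
      exact wVar_ne_zero l r h'
    · subst h'
      rw [wVar_self]
      exact zL_ne_zero _

lemma extract_ev (a : ℚ) : ∀ (l : ℕ) (k : ℕ → ℕ) (y : ItPT l),
    extractPow l k (ev a l y) = (extrP l k y).eval a
  | 0, k, y => rfl
  | l + 1, k, y => extract_ev a l k _

lemma extract_iot (k : ℕ → ℕ) (A : LaurentSeries ℚ) : ∀ (l : ℕ) (y : ItPT l),
    extractPow (l + 1) k (emb l A * iot l y) =
      (A * Polynomial.aeval zinv (extrP l (fun r => k (r + 1)) y)).coeff ((k 0 : ℤ) + 1)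
  | 0, y => rfl
  | l + 1, y => by
    have := extract_iot k A l ((show LaurentSeries (ItPT l) from y).coeff ((k (l + 1) : ℤ) + 1))
    refine Eq.trans ?_ this
    show extractPow (l + 1) k ((HahnSeries.C (emb l A) * lmap (iot l) y).coeff _) = _
    rw [coeff_C_mul]
    rfl

instance charZero_ItLT : ∀ l : ℕ, CharZero (ItLT l)
  | 0 => inferInstanceAs (CharZero ℚ)
  | l + 1 =>
    haveI := charZero_ItLT l
    charZero_of_injective_ringHom (f := cL l) (RingHom.injective _)

lemma coeff_aeval_zinv (Q : ℚ[X]) : (Polynomial.aeval zinv Q).coeff 1 = 0 := by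
  induction Q using Polynomial.induction_on' with
  | add p q hp hq => rw [map_add, HahnSeries.coeff_add, hp, hq, add_zero]
  | monomial m a =>
    rw [Polynomial.aeval_monomial, zinv, HahnSeries.single_pow, one_pow, eq_ratCast,
      ← map_ratCast (HahnSeries.C : ℚ →+* LaurentSeries ℚ), coeff_C_mul,
      HahnSeries.coeff_single_of_ne, mul_zero]
    simp only [nsmul_eq_mul]
    omega

lemma ratCast_eq_C (a : ℚ) : ((a : ℚ) : LaurentSeries ℚ) = HahnSeries.C a := by
  rw [← map_ratCast (HahnSeries.C : ℚ →+* LaurentSeries ℚ) a, Rat.cast_id]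

lemma zinv_sub_facts (a : ℚ) : zinv - (a : LaurentSeries ℚ) ≠ 0 ∧
    ((zinv - (a : LaurentSeries ℚ))⁻¹).coeff 1 = 1 := by
  obtain ⟨u, hu⟩ : IsUnit (1 - PowerSeries.C a * PowerSeries.X : PowerSeries ℚ) := by
    rw [PowerSeries.isUnit_iff_constantCoeff]; simp
  set q : PowerSeries ℚ := ↑u⁻¹ with hq
  have hqu : q * (1 - PowerSeries.C a * PowerSeries.X) = 1 := by
    rw [← hu, hq]; simp
  have hc : PowerSeries.constantCoeff q = 1 := by
    have := congrArg PowerSeries.constantCoeff hqu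
    simpa using this
  have hz : zinv * (HahnSeries.single (1 : ℤ) (1 : ℚ) : LaurentSeries ℚ) = 1 := by
    rw [zinv, HahnSeries.single_mul_single]; simp
  have hL : HahnSeries.ofPowerSeries ℤ ℚ q *
      (1 - (a : LaurentSeries ℚ) * HahnSeries.single (1 : ℤ) (1 : ℚ)) = 1 := by
    have := congrArg (HahnSeries.ofPowerSeries ℤ ℚ) hqu
    rw [map_mul, map_sub, map_mul, map_one, HahnSeries.ofPowerSeries_C,
      HahnSeries.ofPowerSeries_X] at this
    rw [ratCast_eq_C]; exact this
  have key : (HahnSeries.single (1 : ℤ) (1 : ℚ) * HahnSeries.ofPowerSeries ℤ ℚ q) *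
      (zinv - (a : LaurentSeries ℚ)) = 1 := by
    linear_combination hL + HahnSeries.ofPowerSeries ℤ ℚ q * hz
  refine ⟨right_ne_zero_of_mul_eq_one key, ?_⟩
  rw [← eq_inv_of_mul_eq_one_left key, HahnSeries.coeff_single_mul, one_mul]
  have := HahnSeries.ofPowerSeries_apply_coeff (Γ := ℤ) q 0
  simp only [Nat.cast_zero] at this
  rw [sub_self, this]
  simpa using hc

lemma residue_basic {n : ℕ} (a : Fin n → ℚ) (ha : Function.Injective a) (P : ℚ[X]) :
    (Polynomial.aeval zinv P * (∏ i, (zinv - (a i : LaurentSeries ℚ)))⁻¹).coeff 1 =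
      ∑ i, P.eval (a i) * ∏ j ∈ Finset.univ.erase i, (a i - a j)⁻¹ := by
  classical
  set N := Lagrange.nodal Finset.univ a with hN
  have hmon : N.Monic := Lagrange.nodal_monic
  set r := P %ₘ N with hr
  have hPr : r + N * (P /ₘ N) = P := Polynomial.modByMonic_add_div P N
  have hreval : ∀ i, r.eval (a i) = P.eval (a i) := by
    intro i
    rw [← hPr, eval_add, eval_mul, hN, Lagrange.eval_nodal_at_node (Finset.mem_univ i)]; ring
  have hrint : r = Lagrange.interpolate Finset.univ a (fun i => P.eval (a i)) := by
    apply Lagrange.eq_interpolate_of_eval_eq _ ha.injOn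
    · have := Polynomial.degree_modByMonic_lt P hmon
      rwa [hN, Lagrange.degree_nodal] at this
    · intro i _; exact hreval i
  have hnz : ∀ i, zinv - (a i : LaurentSeries ℚ) ≠ 0 := fun i => (zinv_sub_facts _).1
  have hX : ∀ i, Polynomial.aeval zinv (X - C (a i)) = zinv - (a i : LaurentSeries ℚ) := by
    intro i; simp
  have hNz : Polynomial.aeval zinv N = ∏ i, (zinv - (a i : LaurentSeries ℚ)) := by
    rw [hN, Lagrange.nodal_eq, map_prod]; exact Finset.prod_congr rfl fun i _ => hX i
  have hNne : (∏ i, (zinv - (a i : LaurentSeries ℚ))) ≠ 0 :=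
    Finset.prod_ne_zero_iff.mpr fun i _ => hnz i
  have hb : ∀ i, Polynomial.aeval zinv (Lagrange.basis Finset.univ a i) *
      (∏ i, (zinv - (a i : LaurentSeries ℚ)))⁻¹ =
      ((∏ j ∈ Finset.univ.erase i, (a i - a j)⁻¹ : ℚ) : LaurentSeries ℚ) *
        (zinv - (a i : LaurentSeries ℚ))⁻¹ := by
    intro i
    rw [← Finset.mul_prod_erase Finset.univ _ (Finset.mem_univ i), mul_inv, Lagrange.basis,
      map_prod]
    simp only [Lagrange.basisDivisor, map_mul, hX, Finset.prod_mul_distrib]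
    have h1 : (∏ j ∈ Finset.univ.erase i, (zinv - (a j : LaurentSeries ℚ))) ≠ 0 :=
      Finset.prod_ne_zero_iff.mpr fun i _ => hnz i
    have h2 : ∏ x ∈ Finset.univ.erase i, (Polynomial.aeval zinv) (C (a i - a x)⁻¹) =
        ((∏ j ∈ Finset.univ.erase i, (a i - a j)⁻¹ : ℚ) : LaurentSeries ℚ) := by
      rw [Rat.cast_prod]
      refine Finset.prod_congr rfl fun j _ => ?_
      rw [Polynomial.aeval_C, eq_ratCast]
    rw [h2]
    field_simp
  have hmain : Polynomial.aeval zinv P * (∏ i, (zinv - (a i : LaurentSeries ℚ)))⁻¹ =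
      Polynomial.aeval zinv (P /ₘ N) + ∑ i, HahnSeries.C (P.eval (a i) *
        ∏ j ∈ Finset.univ.erase i, (a i - a j)⁻¹) * (zinv - (a i : LaurentSeries ℚ))⁻¹ := by
    conv_lhs => rw [← hPr]
    rw [map_add, map_mul, hNz, add_mul, mul_comm (∏ i, (zinv - (a i : LaurentSeries ℚ))),
      mul_assoc, mul_inv_cancel₀ hNne, mul_one, add_comm, hrint, Lagrange.interpolate_apply,
      map_sum, Finset.sum_mul]
    congr 1
    refine Finset.sum_congr rfl fun i _ => ?_
    rw [map_mul, mul_assoc, hb, Polynomial.aeval_C, eq_ratCast, ← ratCast_eq_C, Rat.cast_mul,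
      mul_assoc]
  rw [hmain, HahnSeries.coeff_add, coeff_aeval_zinv, zero_add, HahnSeries.coeff_sum]
  refine Finset.sum_congr rfl fun i _ => ?_
  rw [coeff_C_mul, (zinv_sub_facts _).2, mul_one]

/-- The factor `∏_{j<k} H(w-j)`, in terms of shifted coordinates. -/
noncomputable def FF {F : Type} [Field F] (n : ℕ) (nu : Fin n → ℚ) (k : ℕ) (w : F) : F :=
  (∏ j ∈ Finset.range k, (w + (n : F) - (j : F))) *
    ∏ i, ((w + (n : F) - (k : F) - (nu i : F)) / (w + (n : F) - (nu i : F)))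

lemma map_FF {F G : Type} [Field F] [Field G] [CharZero F] [CharZero G] (f : F →+* G) (n : ℕ)
    (nu : Fin n → ℚ) (k : ℕ) (w : F) : f (FF n nu k w) = FF n nu k (f w) := by
  simp [FF, map_prod]

/-- residue coefficients -/
noncomputable def cc {n : ℕ} (nu : Fin n → ℚ) (k : ℕ) (i : Fin n) : ℚ :=
  -(k : ℚ) * (∏ j ∈ Finset.range k, (nu i - (j : ℚ))) *
    ∏ j ∈ Finset.univ.erase i, ((nu i - (k : ℚ) - nu j) / (nu i - nu j))

lemma residue (n : ℕ) (nu : Fin n → ℚ) (hnu : Function.Injective nu) (k : ℕ) (R : ℚ[X]) :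
    (((HahnSeries.single (1 : ℤ) (1 : ℚ) : LaurentSeries ℚ) ^ k * FF n nu k zinv) *
      Polynomial.aeval zinv R).coeff ((k : ℤ) + 1) =
      ∑ i, cc nu k i * R.eval (nu i - (n : ℚ)) := by
  classical
  set P : ℚ[X] := (∏ j ∈ Finset.range k, (X + C (n : ℚ) - C (j : ℚ))) *
    (∏ i, (X + C (n : ℚ) - C (k : ℚ) - C (nu i))) * R with hP
  have ha : Function.Injective (fun i => nu i - (n : ℚ)) := fun i j h => hnu (by simpa using h)
  have h1 := residue_basic (fun i => nu i - (n : ℚ)) ha P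
  have h2 : FF n nu k zinv * Polynomial.aeval zinv R = Polynomial.aeval zinv P *
      (∏ i, (zinv - ((nu i - (n : ℚ) : ℚ) : LaurentSeries ℚ)))⁻¹ := by
    rw [hP, FF, Finset.prod_div_distrib]
    simp only [map_mul, map_prod, map_sub, map_add, Polynomial.aeval_X, Polynomial.aeval_C,
      map_natCast, eq_ratCast, Rat.cast_sub, Rat.cast_natCast]
    have : ∀ i, zinv - ((nu i : LaurentSeries ℚ) - (n : LaurentSeries ℚ)) =
      zinv + (n : LaurentSeries ℚ) - (nu i : LaurentSeries ℚ) := fun i => by ring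
    simp only [this]
    rw [div_eq_mul_inv]
    ring
  rw [mul_assoc, h2, HahnSeries.single_pow, HahnSeries.coeff_single_mul]
  have e : (k : ℤ) + 1 - k • (1 : ℤ) = 1 := by simp
  rw [e, one_pow, one_mul, h1]
  refine Finset.sum_congr rfl fun i _ => ?_
  rw [hP, cc]
  simp only [eval_mul, eval_prod, eval_sub, eval_add, eval_X, eval_C]
  rw [← Finset.mul_prod_erase Finset.univ _ (Finset.mem_univ i), Finset.prod_div_distrib,
    Finset.prod_inv_distrib]
  have e1 : ∀ j : ℕ, nu i - (n : ℚ) + n - j = nu i - j := fun j => by ring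
  have e2 : ∀ j, nu i - (n : ℚ) + n - k - nu j = nu i - k - nu j := fun j => by ring
  have e3 : ∀ j, nu i - (n : ℚ) - (nu j - n) = nu i - nu j := fun j => by ring
  simp only [e1, e2, e3]
  rw [div_eq_mul_inv]
  ring

/-- interaction factor -/
noncomputable def rat {F : Type} [Field F] (zs zt : F) (ks kt : ℕ) : F :=
  ((zt - zs) * (zt - zs + ((kt : F) - (ks : F)) * zs * zt)) /
    ((zt - zs - (ks : F) * zs * zt) * (zt - zs + (kt : F) * zs * zt))

lemma map_rat {F G : Type} [Field F] [Field G] (f : F →+* G) (zs zt : F) (ks kt : ℕ) :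
    f (rat zs zt ks kt) = rat (f zs) (f zt) ks kt := by
  simp [rat]

noncomputable def EG {F : Type} [Field F] (n : ℕ) (nu : Fin n → ℚ) (l : ℕ) (k : ℕ → ℕ)
    (z : ℕ → F) : F :=
  (∏ r : Fin l, z r ^ k r * FF n nu (k r) (z r)⁻¹) *
    ∏ p ∈ Finset.univ.filter (fun p : Fin l × Fin l => p.1 < p.2),
      rat (z p.1) (z p.2) (k p.1) (k p.2)

lemma map_EG {F G : Type} [Field F] [Field G] [CharZero F] [CharZero G] (f : F →+* G) (n : ℕ)
    (nu : Fin n → ℚ) (l : ℕ) (k : ℕ → ℕ) (z : ℕ → F) :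
    f (EG n nu l k z) = EG n nu l k (fun r => f (z r)) := by
  simp only [EG, map_mul, map_prod, map_pow, map_FF, map_rat, map_inv₀]

lemma EG_congr {F : Type} [Field F] (n : ℕ) (nu : Fin n → ℚ) (l : ℕ) (k : ℕ → ℕ)
    (z z' : ℕ → F) (h : ∀ r < l, z r = z' r) : EG n nu l k z = EG n nu l k z' := by
  have h' : ∀ r : Fin l, z r = z' r := fun r => h r r.2
  simp only [EG, h']

lemma EG_succ {F : Type} [Field F] (n : ℕ) (nu : Fin n → ℚ) (l : ℕ) (k : ℕ → ℕ)
    (z : ℕ → F) : EG n nu (l + 1) k z = (z 0 ^ k 0 * FF n nu (k 0) (z 0)⁻¹) *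
      (EG n nu l (fun r => k (r + 1)) (fun r => z (r + 1)) *
        ∏ t : Fin l, rat (z 0) (z (t + 1)) (k 0) (k (t + 1))) := by
  simp only [EG, Finset.prod_filter, Fintype.prod_prod_type, Fin.prod_univ_succ]
  simp only [Fin.val_zero, Fin.val_succ, Fin.succ_lt_succ_iff, Fin.succ_pos, if_true,
    lt_self_iff_false, if_false, Fin.not_lt_zero, one_mul]
  ring

/-- the coefficient polynomial-level interaction factor -/
lemma exists_rho (l : ℕ) (k0 kt : ℕ) (t : ℕ) (ht : t < l) : ∃ ρ : ItPT l,
    iot l ρ = rat (wVar (l + 1) 0) (wVar (l + 1) (t + 1)) k0 kt ∧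
    ∀ a : ℚ, ev a l ρ = ((1 - (a : ItLT l) * wVar l t) *
      (1 - ((a + kt - k0 : ℚ) : ItLT l) * wVar l t)) /
      ((1 - ((a - k0 : ℚ) : ItLT l) * wVar l t) * (1 - ((a + kt : ℚ) : ItLT l) * wVar l t)) := by
  obtain ⟨u, hu⟩ := isUnit_aux (X - C (k0 : ℚ)) l t ht
  obtain ⟨v, hv⟩ := isUnit_aux (X + C (kt : ℚ)) l t ht
  refine ⟨(1 - cP l X * jj l (wVar l t)) *
    (1 - cP l (X + C (kt : ℚ) - C (k0 : ℚ)) * jj l (wVar l t)) *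
    ((↑u⁻¹ : ItPT l) * (↑v⁻¹ : ItPT l)), ?_, ?_⟩
  · have hu' : iot l (↑u⁻¹ : ItPT l) = (iot l (u : ItPT l))⁻¹ := by
      refine eq_inv_of_mul_eq_one_left ?_
      rw [← map_mul]; simp
    have hv' : iot l (↑v⁻¹ : ItPT l) = (iot l (v : ItPT l))⁻¹ := by
      refine eq_inv_of_mul_eq_one_left ?_
      rw [← map_mul]; simp
    have h0 := wVar_ne_zero (l + 1) 0 (by omega)
    simp only [map_mul, hu', hv', hu, hv, map_sub, map_add, map_one, iot_jj_wVar l t ht, iot_cP_X,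
      map_natCast]
    set w0 := wVar (l + 1) 0
    set wt := wVar (l + 1) (t + 1)
    have e1 : 1 - w0⁻¹ * wt = -(wt - w0) * w0⁻¹ := by field_simp; ring
    have e2 : 1 - (w0⁻¹ + (kt : ItLT (l + 1)) - k0) * wt =
      -(wt - w0 + ((kt : ItLT (l + 1)) - k0) * w0 * wt) * w0⁻¹ := by field_simp; ring
    have e3 : 1 - (w0⁻¹ - (k0 : ItLT (l + 1))) * wt =
      -(wt - w0 - (k0 : ItLT (l + 1)) * w0 * wt) * w0⁻¹ := by field_simp; ring
    have e4 : 1 - (w0⁻¹ + (kt : ItLT (l + 1))) * wt =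
      -(wt - w0 + (kt : ItLT (l + 1)) * w0 * wt) * w0⁻¹ := by field_simp; ring
    rw [e1, e2, e3, e4, rat]
    generalize wt - w0 = A
    generalize A + ((kt : ItLT (l + 1)) - k0) * w0 * wt = B
    generalize A - (k0 : ItLT (l + 1)) * w0 * wt = D
    generalize A + (kt : ItLT (l + 1)) * w0 * wt = E
    rw [div_eq_mul_inv]
    simp only [mul_inv, inv_inv, inv_neg]
    have : w0⁻¹ * w0 = 1 := inv_mul_cancel₀ h0
    linear_combination (A * B * D⁻¹ * E⁻¹ * (w0⁻¹ * w0 + 1)) * this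
  · intro a
    have hu' : ev a l (↑u⁻¹ : ItPT l) = (ev a l (u : ItPT l))⁻¹ := by
      refine eq_inv_of_mul_eq_one_left ?_
      rw [← map_mul]; simp
    have hv' : ev a l (↑v⁻¹ : ItPT l) = (ev a l (v : ItPT l))⁻¹ := by
      refine eq_inv_of_mul_eq_one_left ?_
      rw [← map_mul]; simp
    rw [map_mul, map_mul, map_mul, hu', hv', hu, hv, div_eq_mul_inv, mul_inv]
    simp only [map_mul, map_sub, map_one, ev_jj]
    simp only [ev_cP, eval_add, eval_X, eval_C, Rat.cast_sub]

lemma FF_update {F : Type} [Field F] [CharZero F] (n : ℕ) (nu : Fin n → ℚ) (i : Fin n)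
    (k0 kt : ℕ) (z : F) (hz : z ≠ 0) (hne : ∀ c : ℚ, 1 - (c : F) * z ≠ 0) :
    FF n nu kt z⁻¹ * (((1 - ((nu i - n : ℚ) : F) * z) *
      (1 - ((nu i - n + kt - k0 : ℚ) : F) * z)) /
      ((1 - ((nu i - n - k0 : ℚ) : F) * z) * (1 - ((nu i - n + kt : ℚ) : F) * z))) =
    FF n (Function.update nu i (nu i - k0)) kt z⁻¹ := by
  classical
  simp only [FF]
  rw [← Finset.mul_prod_erase Finset.univ (fun i => (z⁻¹ + (n : F) - kt - (nu i : F)) /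
      (z⁻¹ + (n : F) - (nu i : F))) (Finset.mem_univ i),
    ← Finset.mul_prod_erase Finset.univ (fun j => (z⁻¹ + (n : F) - kt -
      ((Function.update nu i (nu i - k0) j : ℚ) : F)) /
      (z⁻¹ + (n : F) - ((Function.update nu i (nu i - k0) j : ℚ) : F))) (Finset.mem_univ i)]
  have hE : ∏ j ∈ Finset.univ.erase i, ((z⁻¹ + (n : F) - kt -
      ((Function.update nu i (nu i - k0) j : ℚ) : F)) /
      (z⁻¹ + (n : F) - ((Function.update nu i (nu i - k0) j : ℚ) : F))) =
      ∏ j ∈ Finset.univ.erase i, ((z⁻¹ + (n : F) - kt - (nu j : F)) /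
      (z⁻¹ + (n : F) - (nu j : F))) := by
    refine Finset.prod_congr rfl fun j hj => ?_
    rw [Function.update_of_ne (Finset.ne_of_mem_erase hj)]
  rw [hE]
  generalize ∏ j ∈ Finset.univ.erase i, ((z⁻¹ + (n : F) - kt - (nu j : F)) /
      (z⁻¹ + (n : F) - (nu j : F))) = Q
  rw [Function.update_self]
  have g1 : z⁻¹ + (n : F) - kt - (nu i : F) = (1 - ((nu i - n + kt : ℚ) : F) * z) * z⁻¹ := by
    push_cast; field_simp; ring
  have g2 : z⁻¹ + (n : F) - (nu i : F) = (1 - ((nu i - n : ℚ) : F) * z) * z⁻¹ := by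
    push_cast; field_simp; ring
  have g3 : z⁻¹ + (n : F) - kt - ((nu i - k0 : ℚ) : F) =
      (1 - ((nu i - n + kt - k0 : ℚ) : F) * z) * z⁻¹ := by
    push_cast; field_simp; ring
  have g4 : z⁻¹ + (n : F) - ((nu i - k0 : ℚ) : F) =
      (1 - ((nu i - n - k0 : ℚ) : F) * z) * z⁻¹ := by
    push_cast; field_simp; ring
  rw [g1, g2, g3, g4]
  have h1 := hne (nu i - n + kt)
  have h2 := hne (nu i - n)
  have h4 := hne (nu i - n - k0)
  generalize 1 - ((nu i - n + kt : ℚ) : F) * z = A1 at *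
  generalize 1 - ((nu i - n : ℚ) : F) * z = A2 at *
  generalize 1 - ((nu i - n + kt - k0 : ℚ) : F) * z = A3 at *
  generalize 1 - ((nu i - n - k0 : ℚ) : F) * z = A4 at *
  generalize ∏ j ∈ Finset.range kt, (z⁻¹ + (n : F) - (j : F)) = Q'
  field_simp

lemma EG_update {F : Type} [Field F] [CharZero F] (n : ℕ) (nu : Fin n → ℚ) (i : Fin n)
    (l k0 : ℕ) (k : ℕ → ℕ) (z : ℕ → F) (hz : ∀ r < l, z r ≠ 0)
    (hne : ∀ r < l, ∀ c : ℚ, 1 - (c : F) * z r ≠ 0) :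
    EG n nu l k z * ∏ t : Fin l, (((1 - ((nu i - n : ℚ) : F) * z t) *
      (1 - ((nu i - n + k t - k0 : ℚ) : F) * z t)) /
      ((1 - ((nu i - n - k0 : ℚ) : F) * z t) * (1 - ((nu i - n + k t : ℚ) : F) * z t))) =
    EG n (Function.update nu i (nu i - k0)) l k z := by
  simp only [EG]
  rw [mul_right_comm, ← Finset.prod_mul_distrib]
  congr 1
  refine Finset.prod_congr rfl fun t _ => ?_
  rw [mul_assoc, FF_update n nu i k0 (k t) (z t) (hz t t.2) (hne t t.2)]

noncomputable def SS {n : ℕ} : ℕ → (Fin n → ℚ) → (ℕ → ℕ) → ℚ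
  | 0, _, _ => 1
  | l + 1, nu, k => ∑ i, cc nu (k 0) i *
      SS l (Function.update nu i (nu i - (k 0 : ℚ))) (fun r => k (r + 1))

lemma cc_eq_zero {n : ℕ} (nu : Fin n → ℚ) (hnu : Function.Injective nu) (k : ℕ) (i : Fin n)
    (h : ¬ Function.Injective (Function.update nu i (nu i - (k : ℚ)))) : cc nu k i = 0 := by
  classical
  have : ∃ j, j ≠ i ∧ nu i - (k : ℚ) = nu j := by
    by_contra hc
    push Not at hc
    apply h
    intro a b hab
    by_cases ha : a = i <;> by_cases hb : b = i
    · rw [ha, hb]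
    · subst ha
      rw [Function.update_self, Function.update_of_ne hb] at hab
      exact absurd hab (hc b hb)
    · subst hb
      rw [Function.update_self, Function.update_of_ne ha] at hab
      exact absurd hab.symm (hc a ha)
    · rw [Function.update_of_ne ha, Function.update_of_ne hb] at hab
      exact hnu hab
  obtain ⟨j, hj, hj'⟩ := this
  rw [cc, Finset.prod_eq_zero (i := j) (by simp [hj]), mul_zero]
  rw [hj']; simp

theorem extract_EG (n : ℕ) : ∀ (l : ℕ) (nu : Fin n → ℚ) (k : ℕ → ℕ), Function.Injective nu →
    extractPow l k (EG n nu l k (wVar l)) = SS l nu k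
  | 0, nu, k, _ => by
    have : EG n nu 0 k (wVar 0) = 1 := by simp [EG]
    rw [this]; rfl
  | l + 1, nu, k, hnu => by
    choose ρ hρ1 hρ2 using fun t : Fin l => exists_rho l (k 0) (k (t + 1)) t t.2
    set Y : ItPT l := jj l (EG n nu l (fun r => k (r + 1)) (wVar l)) * ∏ t, ρ t with hY
    set A : LaurentSeries ℚ :=
      (HahnSeries.single (1 : ℤ) (1 : ℚ) : LaurentSeries ℚ) ^ k 0 * FF n nu (k 0) zinv with hA
    have h1 : EG n nu (l + 1) k (wVar (l + 1)) = emb l A * iot l Y := by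
      rw [EG_succ, hA, map_mul, map_pow, map_FF, emb_single, zinv_eq, map_inv₀, emb_single, hY,
        map_mul, map_prod]
      congr 2
      · have := map_EG ((iot l).comp (jj l)) n nu l (fun r => k (r + 1)) (wVar l)
        rw [RingHom.comp_apply] at this
        rw [this]
        apply EG_congr
        intro r hr
        rw [RingHom.comp_apply, iot_jj_wVar l r hr]
      · exact Finset.prod_congr rfl fun t _ => (hρ1 t).symm
    rw [h1, extract_iot, hA, residue n nu hnu, SS]
    refine Finset.sum_congr rfl fun i _ => ?_
    by_cases hinj : Function.Injective (Function.update nu i (nu i - (k 0 : ℚ)))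
    · congr 1
      rw [← extract_ev, ← extract_EG n l _ _ hinj, hY, map_mul, ev_jj, map_prod]
      congr 1
      rw [← EG_update n nu i l (k 0) (fun r => k (r + 1)) (wVar l) (fun r hr => wVar_ne_zero l r hr)
        (fun r hr c => one_sub_ne_zero c l r hr)]
      congr 1
      exact Finset.prod_congr rfl fun t _ => hρ2 t _
    · rw [cc_eq_zero nu hnu _ i hinj, zero_mul, zero_mul]

/-- telescoping -/
lemma prod_PhiOf {F : Type} [Field F] [CharZero F] (n : ℕ) (lam : Fin n → ℕ) (k : ℕ) (z : F)
    (hz : z ≠ 0) (hne : ∀ c : ℚ, 1 - (c : F) * z ≠ 0) :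
    ∏ j ∈ Finset.range k, PhiOf n lam z (j : F) =
      z ^ k * FF n (fun i => (lam i : ℚ) + n - 1 - (i : ℕ)) k z⁻¹ := by
  have hne' : ∀ c : ℚ, z⁻¹ - (c : F) ≠ 0 := by
    intro c h
    apply hne c
    have : (z⁻¹ - (c : F)) * z = 1 - c * z := by field_simp
    rw [← this, h, zero_mul]
  have hfac : ∀ i : Fin n, z⁻¹ + (n : F) - (((lam i : ℚ) + n - 1 - (i : ℕ) : ℚ) : F) =
      z⁻¹ - (lam i : F) + ((i : ℕ) : F) + 1 := by
    intro i; push_cast; ring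
  induction k with
  | zero =>
    simp only [Finset.range_zero, Finset.prod_empty, pow_zero, one_mul, FF, Nat.cast_zero, sub_zero]
    symm
    refine Finset.prod_eq_one fun i _ => div_self ?_
    have := hne' ((lam i : ℚ) - i - 1)
    rw [hfac]
    convert this using 1
    push_cast; ring
  | succ k ih =>
    rw [Finset.prod_range_succ, ih]
    have hk := hne k
    rw [Rat.cast_natCast] at hk
    have hP : PhiOf n lam z (k : F) = z * Hof n lam (z⁻¹ - (k : F)) := by
      rw [PhiOf, phiOf]
      have e : (z / (1 - (k : F) * z))⁻¹ = z⁻¹ - (k : F) := by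
        field_simp
      rw [e]
      field_simp
    rw [hP, Hof, FF, FF, Finset.prod_range_succ]
    have hden : ∀ i : Fin n, z⁻¹ - (k : F) - (lam i : F) + ((i : ℕ) : F) + 1 =
        z⁻¹ + (n : F) - (k : F) - (((lam i : ℚ) + n - 1 - (i : ℕ) : ℚ) : F) := by
      intro i; push_cast; ring
    have hnum : ∀ i : Fin n, z⁻¹ - (k : F) - (lam i : F) + ((i : ℕ) : F) =
        z⁻¹ + (n : F) - ((k + 1 : ℕ) : F) - (((lam i : ℚ) + n - 1 - (i : ℕ) : ℚ) : F) := by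
      intro i; push_cast; ring
    simp only [hden]
    simp only [hnum]
    rw [Finset.prod_div_distrib, Finset.prod_div_distrib]
    have hD : ∏ i : Fin n,
        (z⁻¹ + (n : F) - (k : F) - (((lam i : ℚ) + n - 1 - (i : ℕ) : ℚ) : F)) ≠ 0 := by
      refine Finset.prod_ne_zero_iff.mpr fun i _ => ?_
      have := hne' (k + (lam i : ℚ) - i - 1)
      convert this using 1
      push_cast; ring
    have e : z⁻¹ - (k : F) + n = z⁻¹ + n - k := by ring
    rw [e]
    generalize ∏ i : Fin n,
        (z⁻¹ + (n : F) - (k : F) - (((lam i : ℚ) + n - 1 - (i : ℕ) : ℚ) : F)) = D at *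
    generalize ∏ j ∈ Finset.range k, (z⁻¹ + (n : F) - (j : F)) = Q
    generalize ∏ i : Fin n, (z⁻¹ + (n : F) - ((k + 1 : ℕ) : F) -
      (((lam i : ℚ) + n - 1 - (i : ℕ) : ℚ) : F)) = Q1
    generalize ∏ i : Fin n, (z⁻¹ + (n : F) - (((lam i : ℚ) + n - 1 - (i : ℕ) : ℚ) : F)) = Q2
    generalize z⁻¹ + (n : F) - (k : F) = q
    rw [pow_succ, div_eq_mul_inv, div_eq_mul_inv, div_eq_mul_inv]
    have hDD : D * D⁻¹ = 1 := mul_inv_cancel₀ hD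
    linear_combination (z ^ k * z * Q * Q2⁻¹ * q * Q1) * hDD

/-- `D(ν)/∏ νᵢ!` -/
noncomputable def gg {n : ℕ} (nu : Fin n → ℕ) : ℚ :=
  (Matrix.vandermonde (fun i => (nu i : ℚ))).det / ∏ i, ((Nat.factorial (nu i) : ℕ) : ℚ)

noncomputable def GG {n : ℕ} : ℕ → (Fin n → ℕ) → (ℕ → ℕ) → ℚ
  | 0, nu, _ => gg nu
  | l + 1, nu, k => ∑ i, if k 0 ≤ nu i then
      GG l (Function.update nu i (nu i - k 0)) (fun r => k (r + 1)) else 0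

lemma gg_perm {n : ℕ} (σ : Equiv.Perm (Fin n)) (nu : Fin n → ℕ) :
    gg (nu ∘ σ) = (Equiv.Perm.sign σ : ℤ) * gg nu := by
  have h1 : Matrix.vandermonde (fun i => ((nu ∘ σ) i : ℚ)) =
      (Matrix.vandermonde (fun i => (nu i : ℚ))).submatrix σ id := rfl
  have h2 : ∏ i, ((Nat.factorial ((nu ∘ σ) i) : ℕ) : ℚ) = ∏ i, ((Nat.factorial (nu i) : ℕ) : ℚ) :=
    Equiv.prod_comp σ (fun i => ((Nat.factorial (nu i) : ℕ) : ℚ))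
  rw [gg, gg, h1, h2, Matrix.det_permute, mul_div_assoc]

lemma GG_perm {n : ℕ} (σ : Equiv.Perm (Fin n)) : ∀ (l : ℕ) (nu : Fin n → ℕ) (k : ℕ → ℕ),
    GG l (nu ∘ σ) k = (Equiv.Perm.sign σ : ℤ) * GG l nu k
  | 0, nu, _ => gg_perm σ nu
  | l + 1, nu, k => by
    rw [GG, GG, Finset.mul_sum]
    conv_rhs => rw [← Equiv.sum_comp σ]
    refine Finset.sum_congr rfl fun i _ => ?_
    have : Function.update (nu ∘ σ) i ((nu ∘ σ) i - k 0) =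
        Function.update nu (σ i) (nu (σ i) - k 0) ∘ σ := by
      ext j
      by_cases h : j = i
      · subst h; simp
      · have h' : σ j ≠ σ i := fun e => h (σ.injective e)
        simp [h]
    rw [this, GG_perm σ l]
    simp only [Function.comp_apply]
    split_ifs <;> simp

lemma GG_not_inj {n : ℕ} (l : ℕ) (nu : Fin n → ℕ) (k : ℕ → ℕ) (h : ¬ Function.Injective nu) :
    GG l nu k = 0 := by
  rw [Function.Injective] at h
  push Not at h
  obtain ⟨a, b, hab, hne⟩ := h
  have h1 := GG_perm (Equiv.swap a b) l nu k
  have h2 : nu ∘ Equiv.swap a b = nu := by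
    ext j
    rw [Function.comp_apply]
    rcases eq_or_ne j a with rfl | ha
    · rw [Equiv.swap_apply_left, hab]
    rcases eq_or_ne j b with rfl | hb
    · rw [Equiv.swap_apply_right, hab]
    · rw [Equiv.swap_apply_of_ne_of_ne ha hb]
  rw [h2, Equiv.Perm.sign_swap hne] at h1
  simp at h1
  linarith

lemma vand_update {n : ℕ} (v : Fin n → ℚ) (i : Fin n) :
    ∃ c : ℚ, ∀ x, (Matrix.vandermonde (Function.update v i x)).det =
      c * ∏ j ∈ Finset.univ.erase i, (x - v j) := by
  classical
  -- pairs not involving `i`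
  refine ⟨(∏ p ∈ Finset.univ.filter (fun p : Fin n × Fin n => p.1 < p.2 ∧ p.1 ≠ i ∧ p.2 ≠ i),
    (v p.2 - v p.1)) * ∏ j ∈ Finset.univ.erase i, (if i < j then -1 else 1), fun x => ?_⟩
  rw [Matrix.det_vandermonde]
  have key : ∏ a : Fin n, ∏ b ∈ Finset.Ioi a,
      (Function.update v i x b - Function.update v i x a) =
      ∏ a : Fin n, ∏ b : Fin n, (if a < b then
        (Function.update v i x b - Function.update v i x a) else 1) := by
    refine Finset.prod_congr rfl fun a _ => ?_
    rw [← Finset.prod_filter]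
    refine Finset.prod_congr ?_ fun _ _ => rfl
    ext b; simp
  have split : ∀ f : Fin n → Fin n → ℚ, ∏ a, ∏ b, f a b =
      (∏ a ∈ Finset.univ.erase i, ∏ b ∈ Finset.univ.erase i, f a b) *
      (f i i * ∏ j ∈ Finset.univ.erase i, (f i j * f j i)) := by
    intro f
    rw [← Finset.mul_prod_erase Finset.univ _ (Finset.mem_univ i),
      ← Finset.mul_prod_erase Finset.univ (f i) (Finset.mem_univ i)]
    have : ∏ a ∈ Finset.univ.erase i, ∏ b, f a b =
        ∏ a ∈ Finset.univ.erase i, (f a i * ∏ b ∈ Finset.univ.erase i, f a b) :=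
      Finset.prod_congr rfl fun a _ =>
        (Finset.mul_prod_erase Finset.univ (f a) (Finset.mem_univ i)).symm
    rw [this, Finset.prod_mul_distrib, Finset.prod_mul_distrib]
    ring
  rw [key, split, if_neg (lt_irrefl i), one_mul, Finset.prod_filter, Fintype.prod_prod_type, split,
    mul_assoc, mul_assoc]
  congr 1
  · refine Finset.prod_congr rfl fun a ha => Finset.prod_congr rfl fun b hb => ?_
    have ha' := Finset.ne_of_mem_erase ha
    have hb' := Finset.ne_of_mem_erase hb
    simp [ha', hb']
  · simp only [ne_eq, not_true_eq_false, and_false, false_and, if_false, mul_one, one_mul,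
      Finset.prod_const_one]
    rw [← Finset.prod_mul_distrib]
    refine Finset.prod_congr rfl fun j hj => ?_
    have hj' := Finset.ne_of_mem_erase hj
    rcases lt_or_gt_of_ne hj' with h | h
    · simp [h, h.not_gt, hj']
    · simp [h, h.not_gt, hj']

lemma vand_update' {n : ℕ} (v : Fin n → ℚ) (hv : Function.Injective v) (i : Fin n) (x : ℚ) :
    (Matrix.vandermonde (Function.update v i x)).det = (Matrix.vandermonde v).det *
      ∏ j ∈ Finset.univ.erase i, ((x - v j) / (v i - v j)) := by
  obtain ⟨c, hc⟩ := vand_update v i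
  have h1 := hc (v i)
  rw [Function.update_eq_self] at h1
  rw [hc x, h1, Finset.prod_div_distrib]
  have : ∏ j ∈ Finset.univ.erase i, (v i - v j) ≠ 0 :=
    Finset.prod_ne_zero_iff.mpr fun j hj => sub_ne_zero.mpr fun e =>
      Finset.ne_of_mem_erase hj (hv e).symm
  field_simp

lemma gg_cc {n : ℕ} (nu : Fin n → ℕ) (hnu : Function.Injective nu) (k : ℕ) (i : Fin n)
    (h : k ≤ nu i) : gg nu * cc (fun i => (nu i : ℚ)) k i =
      -(k : ℚ) * gg (Function.update nu i (nu i - k)) := by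
  have hinj : Function.Injective (fun i => (nu i : ℚ)) := Nat.cast_injective.comp hnu
  have e1 : (fun j => ((Function.update nu i (nu i - k) j : ℕ) : ℚ)) =
      Function.update (fun i => (nu i : ℚ)) i ((nu i : ℚ) - k) := by
    ext j
    by_cases hj : j = i
    · subst hj; simp [Nat.cast_sub h]
    · simp [hj]
  rw [gg, gg, e1, vand_update' _ hinj, cc,
    ← Finset.mul_prod_erase Finset.univ (fun i => ((Nat.factorial (nu i) : ℕ) : ℚ))
      (Finset.mem_univ i),
    ← Finset.mul_prod_erase Finset.univ (fun j => ((Nat.factorial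
      (Function.update nu i (nu i - k) j) : ℕ) : ℚ)) (Finset.mem_univ i)]
  have e2 : ∏ j ∈ Finset.univ.erase i, ((Nat.factorial
      (Function.update nu i (nu i - k) j) : ℕ) : ℚ) =
      ∏ j ∈ Finset.univ.erase i, ((Nat.factorial (nu j) : ℕ) : ℚ) :=
    Finset.prod_congr rfl fun j hj => by rw [Function.update_of_ne (Finset.ne_of_mem_erase hj)]
  have e3 : ∏ j ∈ Finset.range k, ((nu i : ℚ) - (j : ℚ)) = (Nat.descFactorial (nu i) k : ℚ) := by
    rw [← descPochhammer_eval_eq_descFactorial, descPochhammer_eval_eq_prod_range]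
  have e4 : ((Nat.factorial (nu i) : ℕ) : ℚ) =
      (Nat.factorial (nu i - k) : ℕ) * (Nat.descFactorial (nu i) k : ℕ) := by
    exact_mod_cast (Nat.factorial_mul_descFactorial h).symm
  rw [e2, e3, Function.update_self, e4]
  have n1 : ((Nat.factorial (nu i - k) : ℕ) : ℚ) ≠ 0 := by exact_mod_cast Nat.factorial_ne_zero _
  have n2 : ((Nat.descFactorial (nu i) k : ℕ) : ℚ) ≠ 0 := by
    have : Nat.descFactorial (nu i) k ≠ 0 := by
      rw [Ne, Nat.descFactorial_eq_zero_iff_lt]; omega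
    exact_mod_cast this
  have n3 : ∏ j ∈ Finset.univ.erase i, ((Nat.factorial (nu j) : ℕ) : ℚ) ≠ 0 :=
    Finset.prod_ne_zero_iff.mpr fun j _ => by exact_mod_cast Nat.factorial_ne_zero _
  generalize ∏ j ∈ Finset.univ.erase i, ((Nat.factorial (nu j) : ℕ) : ℚ) = Q at *
  generalize ∏ j ∈ Finset.univ.erase i, ((nu i : ℚ) - k - nu j) / ((nu i : ℚ) - nu j) = Q'
  field_simp

lemma cc_lt {n : ℕ} (nu : Fin n → ℕ) (k : ℕ) (i : Fin n) (h : nu i < k) :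
    cc (fun i => (nu i : ℚ)) k i = 0 := by
  rw [cc, Finset.prod_eq_zero (i := nu i) (by simp [h]) (by simp), mul_zero, zero_mul]

lemma gg_SS {n : ℕ} : ∀ (l : ℕ) (nu : Fin n → ℕ) (k : ℕ → ℕ), Function.Injective nu →
    gg nu * SS l (fun i => (nu i : ℚ)) k = (-1) ^ l * (∏ r : Fin l, (k r : ℚ)) * GG l nu k
  | 0, nu, k, _ => by simp [SS, GG]
  | l + 1, nu, k, hnu => by
    rw [SS, GG, Finset.mul_sum, Finset.mul_sum]
    refine Finset.sum_congr rfl fun i _ => ?_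
    by_cases h : k 0 ≤ nu i
    · have e1 : Function.update (fun i => (nu i : ℚ)) i ((nu i : ℚ) - k 0) =
          (fun j => ((Function.update nu i (nu i - k 0) j : ℕ) : ℚ)) := by
        ext j
        by_cases hj : j = i
        · subst hj; simp [Nat.cast_sub h]
        · simp [hj]
      rw [if_pos h, ← mul_assoc]
      by_cases hinj : Function.Injective (Function.update nu i (nu i - k 0))
      · rw [gg_cc nu hnu _ i h, e1, mul_assoc, gg_SS l _ _ hinj, Fin.prod_univ_succ]
        simp only [Fin.val_zero, Fin.val_succ]
        ring
      · rw [GG_not_inj _ _ _ hinj, cc_eq_zero (fun i => (nu i : ℚ)) (Nat.cast_injective.comp hnu)]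
        · ring
        · rw [e1]
          intro hc
          exact hinj (fun a b hab => hc (by simp [hab]))
    · rw [if_neg h, cc_lt nu _ i (by omega)]; ring

lemma sum_inj {n : ℕ} (nu : Fin n → ℕ) (hnu : Function.Injective nu) :
    ∑ i : Fin n, (n - 1 - (i : ℕ)) ≤ ∑ i, nu i := by
  classical
  have h := Finset.sum_range_le_sum (s := Finset.univ.image (fun i => (nu i : ℤ))) (c := 0)
    (by intro x hx; simp at hx; omega)
  have hinj : Function.Injective (fun i => (nu i : ℤ)) := Nat.cast_injective.comp hnu
  rw [Finset.card_image_of_injective _ hinj, Finset.sum_image (fun a _ b _ e => hinj e)] at h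
  simp only [Finset.card_univ, Fintype.card_fin, zero_add] at h
  rw [Fin.sum_univ_eq_sum_range (fun i => n - 1 - i) n, Finset.sum_range_reflect (fun i => i) n]
  have h2 : ((∑ j ∈ Finset.range n, j : ℕ) : ℤ) ≤ ((∑ i, nu i : ℕ) : ℤ) := by
    push_cast
    exact h
  exact_mod_cast h2

lemma sum_update {n : ℕ} (nu : Fin n → ℕ) (i : Fin n) (k : ℕ) (h : k ≤ nu i) :
    ∑ j, Function.update nu i (nu i - k) j + k = ∑ j, nu j := by
  classical
  rw [Finset.sum_update_of_mem (Finset.mem_univ i), Finset.sdiff_singleton_eq_erase,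
    ← Finset.add_sum_erase Finset.univ nu (Finset.mem_univ i)]
  omega

lemma GG_small {n : ℕ} : ∀ (l : ℕ) (nu : Fin n → ℕ) (k : ℕ → ℕ),
    ∑ i, nu i < ∑ r : Fin l, k r + ∑ i : Fin n, (n - 1 - (i : ℕ)) → GG l nu k = 0
  | 0, nu, k, h => by
    apply GG_not_inj
    intro hinj
    have := sum_inj nu hinj
    simp at h
    omega
  | l + 1, nu, k, h => by
    rw [GG]
    refine Finset.sum_eq_zero fun i _ => ?_
    split_ifs with hk
    · apply GG_small l
      have := sum_update nu i (k 0) hk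
      rw [Fin.sum_univ_succ] at h
      simp only [Fin.val_zero, Fin.val_succ] at h
      omega
    · rfl

lemma coeff_psum_mul {n : ℕ} (m : ℕ) (nu : Fin n → ℕ) (Q : MvPolynomial (Fin n) ℤ) :
    MvPolynomial.coeff (Finsupp.equivFunOnFinite.symm nu)
      ((∑ i : Fin n, MvPolynomial.X i ^ m) * Q) =
    ∑ i, if m ≤ nu i then
      MvPolynomial.coeff (Finsupp.equivFunOnFinite.symm (Function.update nu i (nu i - m))) Q
      else 0 := by
  classical
  rw [Finset.sum_mul, MvPolynomial.coeff_sum]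
  refine Finset.sum_congr rfl fun i _ => ?_
  rw [MvPolynomial.X_pow_eq_monomial, MvPolynomial.coeff_monomial_mul', one_mul]
  have h1 : Finsupp.single i m ≤ Finsupp.equivFunOnFinite.symm nu ↔ m ≤ nu i := by
    rw [Finsupp.single_le_iff]; rfl
  simp only [h1]
  split_ifs with h
  · congr 1
    ext j
    rw [Finsupp.tsub_apply]
    simp only [Finsupp.coe_equivFunOnFinite_symm]
    by_cases hj : j = i
    · subst hj; simp
    · simp [hj, Finsupp.single_apply, Ne.symm hj]
  · rfl

/-- the alternant `a_δ` -/
noncomputable def aD (n : ℕ) : MvPolynomial (Fin n) ℤ :=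
  ∑ w : Equiv.Perm (Fin n), MvPolynomial.C ((Equiv.Perm.sign w : ℤ)) *
    ∏ i : Fin n, MvPolynomial.X i ^ (n - 1 - ((w i : ℕ)))

lemma det_desc {n : ℕ} (nu : Fin n → ℕ) :
    ∑ w : Equiv.Perm (Fin n), ((Equiv.Perm.sign w : ℤ) : ℚ) *
      ∏ i, ((Nat.descFactorial (nu i) (n - 1 - (w i : ℕ)) : ℕ) : ℚ) =
    ((Equiv.Perm.sign (Fin.revPerm : Equiv.Perm (Fin n)) : ℤ) : ℚ) *
      (Matrix.vandermonde (fun i => (nu i : ℚ))).det := by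
  have h := Matrix.det_eval_matrixOfPolynomials_eq_det_vandermonde (fun i => (nu i : ℚ))
    (fun j : Fin n => descPochhammer ℚ j) (fun i => descPochhammer_natDegree _ _)
    (fun i => monic_descPochhammer _ _)
  rw [h, ← Matrix.det_permute', ← Matrix.det_transpose, Matrix.det_apply']
  refine Finset.sum_congr rfl fun w _ => ?_
  congr 1
  refine Finset.prod_congr rfl fun i _ => ?_
  simp only [Matrix.transpose_apply, Matrix.submatrix_apply, id, Matrix.of_apply,
    descPochhammer_eval_eq_descFactorial, Fin.revPerm_apply, Fin.val_rev]
  congr 2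
  omega

lemma coeff_base {n : ℕ} (N : ℕ) (nu : Fin n → ℕ)
    (h : ∑ i, nu i = N + ∑ i : Fin n, (n - 1 - (i : ℕ))) :
    ((MvPolynomial.coeff (Finsupp.equivFunOnFinite.symm nu)
      ((∑ i : Fin n, MvPolynomial.X i) ^ N * aD n) : ℤ) : ℚ) =
    ((Equiv.Perm.sign (Fin.revPerm : Equiv.Perm (Fin n)) : ℤ) : ℚ) * (Nat.factorial N : ℕ) *
      gg nu := by
  classical
  have hprod : ∏ i, ((Nat.factorial (nu i) : ℕ) : ℚ) ≠ 0 :=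
    Finset.prod_ne_zero_iff.mpr fun j _ => by exact_mod_cast Nat.factorial_ne_zero _
  have hR : ((Equiv.Perm.sign (Fin.revPerm : Equiv.Perm (Fin n)) : ℤ) : ℚ) *
      (Nat.factorial N : ℕ) * gg nu = ∑ w : Equiv.Perm (Fin n), (Nat.factorial N : ℕ) *
      (((Equiv.Perm.sign w : ℤ) : ℚ) *
      ∏ i, ((Nat.descFactorial (nu i) (n - 1 - (w i : ℕ)) : ℕ) : ℚ)) /
        ∏ i, ((Nat.factorial (nu i) : ℕ) : ℚ) := by
    rw [← Finset.sum_div, ← Finset.mul_sum, det_desc, gg]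
    ring
  rw [hR, aD, Finset.mul_sum, MvPolynomial.coeff_sum, Int.cast_sum]
  refine Finset.sum_congr rfl fun w _ => ?_
  have hm : MvPolynomial.C ((Equiv.Perm.sign w : ℤ)) *
      ∏ i : Fin n, MvPolynomial.X i ^ (n - 1 - ((w i : ℕ))) =
      MvPolynomial.monomial (Finsupp.equivFunOnFinite.symm fun i : Fin n => n - 1 - ((w i : ℕ)))
        ((Equiv.Perm.sign w : ℤ)) := by
    rw [MvPolynomial.monomial_eq, Finsupp.prod_fintype _ _ (by simp)]
    rfl
  rw [hm, MvPolynomial.coeff_mul_monomial']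
  have hsumw : ∑ i : Fin n, (n - 1 - (w i : ℕ)) = ∑ i : Fin n, (n - 1 - (i : ℕ)) :=
    Equiv.sum_comp w (fun i : Fin n => n - 1 - (i : ℕ))
  by_cases hle : ∀ i, n - 1 - (w i : ℕ) ≤ nu i
  · rw [if_pos (by intro i; exact hle i)]
    rw [MvPolynomial.coeff_sum_X_pow_of_fintype]
    set d : Fin n →₀ ℕ := Finsupp.equivFunOnFinite.symm nu -
      Finsupp.equivFunOnFinite.symm fun i : Fin n => n - 1 - ((w i : ℕ)) with hd
    have hdi : ∀ i, d i = nu i - (n - 1 - (w i : ℕ)) := fun i => rfl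
    have hdsum : ∑ i, d i = N := by
      have : ∑ i, d i + ∑ i : Fin n, (n - 1 - (w i : ℕ)) = ∑ i, nu i := by
        rw [← Finset.sum_add_distrib]
        refine Finset.sum_congr rfl fun i _ => ?_
        rw [hdi]; have := hle i; omega
      omega
    have hdsum' : d.sum (fun _ m => m) = N := by
      rw [Finsupp.sum_fintype _ _ (by simp)]; exact hdsum
    rw [if_pos hdsum']
    have hmul : (∏ i, Nat.factorial (d i)) * d.multinomial = Nat.factorial N := by
      have := Nat.multinomial_spec d.support d
      rw [Finsupp.multinomial_eq, ← hdsum', Finsupp.sum, ← this]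
      congr 1
      symm
      apply Finset.prod_subset (Finset.subset_univ _)
      intro i _ hi
      rw [Finsupp.notMem_support_iff.mp hi]; rfl
    have hfac : ∏ i, ((Nat.factorial (nu i) : ℕ) : ℚ) = (∏ i, ((Nat.factorial (d i) : ℕ) : ℚ)) *
        ∏ i, ((Nat.descFactorial (nu i) (n - 1 - (w i : ℕ)) : ℕ) : ℚ) := by
      rw [← Finset.prod_mul_distrib]
      refine Finset.prod_congr rfl fun i _ => ?_
      rw [hdi]
      exact_mod_cast (Nat.factorial_mul_descFactorial (hle i)).symm
    have hmul' : (∏ i, ((Nat.factorial (d i) : ℕ) : ℚ)) * (d.multinomial : ℚ) =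
      (Nat.factorial N : ℕ) := by exact_mod_cast hmul
    rw [eq_div_iff hprod, hfac, ← hmul']
    push_cast
    ring
  · rw [if_neg (by intro hc; exact hle fun i => hc i)]
    push Not at hle
    obtain ⟨i, hi⟩ := hle
    have : ∏ i, ((Nat.descFactorial (nu i) (n - 1 - (w i : ℕ)) : ℕ) : ℚ) = 0 := by
      refine Finset.prod_eq_zero (Finset.mem_univ i) ?_
      rw [Nat.descFactorial_eq_zero_iff_lt.mpr hi]; simp
    rw [this]; simp

lemma coeff_all {n : ℕ} (N : ℕ) : ∀ (l : ℕ) (nu : Fin n → ℕ) (k : ℕ → ℕ),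
    ∑ i, nu i = ∑ r : Fin l, k r + (N + ∑ i : Fin n, (n - 1 - (i : ℕ))) →
    ((MvPolynomial.coeff (Finsupp.equivFunOnFinite.symm nu)
      ((∏ r : Fin l, ∑ i : Fin n, MvPolynomial.X i ^ k r) *
        ((∑ i : Fin n, MvPolynomial.X i) ^ N * aD n)) : ℤ) : ℚ) =
    ((Equiv.Perm.sign (Fin.revPerm : Equiv.Perm (Fin n)) : ℤ) : ℚ) * (Nat.factorial N : ℕ) *
      GG l nu k
  | 0, nu, k, h => by
    rw [Finset.univ_eq_empty, Finset.prod_empty, one_mul, GG]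
    apply coeff_base
    simpa using h
  | l + 1, nu, k, h => by
    rw [Fin.prod_univ_succ, mul_assoc, coeff_psum_mul, GG, Int.cast_sum, Finset.mul_sum]
    refine Finset.sum_congr rfl fun i _ => ?_
    simp only [Fin.val_zero, Fin.val_succ]
    split_ifs with hk
    · have := sum_update nu i (k 0) hk
      rw [Fin.sum_univ_succ] at h
      simp only [Fin.val_zero, Fin.val_succ] at h
      exact coeff_all N l _ (fun r => k (r + 1)) (by omega)
    · simp

lemma frobChar_eq (n : ℕ) (lam : Fin n → ℕ) (hsum : ∑ i, lam i = n) (l : ℕ) (k : ℕ → ℕ) (N : ℕ)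
    (h : ∑ r : Fin l, k r + N = n) :
    (frobChar n lam (Multiset.map (fun r : Fin l => k (r : ℕ)) Finset.univ.val +
      Multiset.replicate N 1) : ℚ) =
    ((Equiv.Perm.sign (Fin.revPerm : Equiv.Perm (Fin n)) : ℤ) : ℚ) * (Nat.factorial N : ℕ) *
      GG l (fun i => lam i + (n - 1 - (i : ℕ))) k := by
  rw [← coeff_all N l, frobChar]
  · rw [Multiset.map_add, Multiset.prod_add, Multiset.map_map, Multiset.map_replicate,
      Multiset.prod_replicate]
    simp only [pow_one, mul_assoc]
    rfl
  · rw [Finset.sum_add_distrib, hsum]; omega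


end GFF

/-- generalized Frobenius formula in the variables `z_r ↦ 1/z_r`, the form
used for generalized Kerov polynomials: `(-1)^l k₁⋯k_l Σ^λ_{k₁,…,k_l} =
[z₁^{k₁+1}]⋯[z_l^{k_l+1}] [∏_r ∏_{j=0}^{k_r-1} Φ(z_r,j) ⋅
∏_{s<t} (z_t-z_s)(z_t-z_s+(k_t-k_s)z_sz_t) / ((z_t-z_s-k_s z_s z_t)(z_t-z_s+k_t z_s z_t))]`,
where `k r` stands for `k_{r+1}`. -/
theorem generalized_frobenius_formula_kerov_form (n : ℕ) (lam : Fin n → ℕ)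
    (hanti : ∀ i j : Fin n, i ≤ j → lam j ≤ lam i)
    (hsum : ∑ i, lam i = n)
    (l : ℕ) (k : ℕ → ℕ) (hk : ∀ r < l, 1 ≤ k r) :
    (-1 : ℚ) ^ l * (∏ r : Fin l, (k (r : ℕ) : ℚ)) *
        SigmaChar n lam (Multiset.map (fun r : Fin l => k (r : ℕ)) Finset.univ.val) =
      extractPow l k
        ((∏ r : Fin l, ∏ j ∈ Finset.range (k (r : ℕ)),
            PhiOf n lam (wVar l r) (j : ItLT l)) *
          ∏ p ∈ Finset.univ.filter (fun p : Fin l × Fin l => p.1 < p.2),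
            ((wVar l p.2 - wVar l p.1) *
                (wVar l p.2 - wVar l p.1 +
                  ((k (p.2 : ℕ) : ItLT l) - (k (p.1 : ℕ) : ItLT l)) *
                    wVar l p.1 * wVar l p.2)) /
              ((wVar l p.2 - wVar l p.1 -
                  (k (p.1 : ℕ) : ItLT l) * wVar l p.1 * wVar l p.2) *
                (wVar l p.2 - wVar l p.1 +
                  (k (p.2 : ℕ) : ItLT l) * wVar l p.1 * wVar l p.2))) := by
  have hmu : Function.Injective (fun i : Fin n => lam i + (n - 1 - (i : ℕ))) := by
    intro i j hij
    simp only at hij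
    rcases lt_trichotomy i j with h | h | h
    · have h1 := hanti i j h.le
      have h2 : (i : ℕ) < j := h
      have h3 := j.isLt
      omega
    · exact h
    · have h1 := hanti j i h.le
      have h2 : (j : ℕ) < i := h
      have h3 := i.isLt
      omega
  have hcast : (fun i : Fin n => ((lam i + (n - 1 - (i : ℕ)) : ℕ) : ℚ)) =
      fun i : Fin n => (lam i : ℚ) + n - 1 - (i : ℕ) := by
    ext i
    have h3 := i.isLt
    rw [Nat.cast_add, Nat.cast_sub (by omega), Nat.cast_sub (by omega)]
    push_cast
    ring
  have hinj : Function.Injective (fun i : Fin n => (lam i : ℚ) + n - 1 - (i : ℕ)) := by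
    rw [← hcast]
    exact Nat.cast_injective.comp hmu
  have hR := GFF.extract_EG n l (fun i : Fin n => (lam i : ℚ) + n - 1 - (i : ℕ)) k hinj
  have hprod : (∏ r : Fin l, ∏ j ∈ Finset.range (k (r : ℕ)),
      PhiOf n lam (wVar l r) (j : ItLT l)) = ∏ r : Fin l, wVar l r ^ k r *
        GFF.FF n (fun i : Fin n => (lam i : ℚ) + n - 1 - (i : ℕ)) (k r) (wVar l r)⁻¹ :=
    Finset.prod_congr rfl fun r _ => GFF.prod_PhiOf n lam (k r) (wVar l r)
      (GFF.wVar_ne_zero l r r.isLt) (fun c => GFF.one_sub_ne_zero c l r r.isLt)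
  rw [hprod]
  refine Eq.trans ?_ hR.symm
  have hg : GFF.gg (fun i : Fin n => lam i + (n - 1 - (i : ℕ))) ≠ 0 := by
    rw [GFF.gg]
    refine div_ne_zero (Matrix.det_vandermonde_ne_zero_iff.mpr (Nat.cast_injective.comp hmu))
      (Finset.prod_ne_zero_iff.mpr fun j _ => by exact_mod_cast Nat.factorial_ne_zero _)
  have hSS := GFF.gg_SS l (fun i : Fin n => lam i + (n - 1 - (i : ℕ))) k hmu
  rw [hcast] at hSS
  apply mul_left_cancel₀ hg
  rw [hSS]
  have hms : (Multiset.map (fun r : Fin l => k (r : ℕ)) Finset.univ.val).sum =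
      ∑ r : Fin l, k r := rfl
  have hS : GFF.gg (fun i : Fin n => lam i + (n - 1 - (i : ℕ))) *
      SigmaChar n lam (Multiset.map (fun r : Fin l => k (r : ℕ)) Finset.univ.val) =
      GFF.GG l (fun i : Fin n => lam i + (n - 1 - (i : ℕ))) k := by
    rw [SigmaChar, hms]
    split_ifs with hle
    · have hden := GFF.frobChar_eq n lam hsum 0 k n (by simp)
      have hz : Multiset.map (fun r : Fin 0 => k (r : ℕ)) Finset.univ.val +
          Multiset.replicate n 1 = Multiset.replicate n 1 := by simp
      rw [hz, GFF.GG] at hden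
      rw [GFF.frobChar_eq n lam hsum l k _ (by omega), hden]
      have hfac : ((Nat.factorial n : ℕ) : ℚ) = (Nat.factorial (n - ∑ r : Fin l, k r) : ℕ) *
          (Nat.descFactorial n (∑ r : Fin l, k r) : ℕ) := by
        exact_mod_cast (Nat.factorial_mul_descFactorial hle).symm
      have hn0 : ((Nat.factorial n : ℕ) : ℚ) ≠ 0 := by exact_mod_cast Nat.factorial_ne_zero n
      have hs0 : ((Equiv.Perm.sign (Fin.revPerm : Equiv.Perm (Fin n)) : ℤ) : ℚ) ≠ 0 := by
        exact_mod_cast (Equiv.Perm.sign (Fin.revPerm : Equiv.Perm (Fin n))).ne_zero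
      rw [mul_div_assoc', div_eq_iff (mul_ne_zero (mul_ne_zero hs0 hn0) hg), hfac]
      ring
    · rw [GFF.GG_small l, mul_zero]
      rw [Finset.sum_add_distrib, hsum]
      omega
  rw [← hS]
  ring
end
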